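/- arXiv:quant-ph/0409016 — 2 statements merged into one kernel-verified Lean document; each statement's English description precedes it below -/
import Mathlib

section
/- Let ρ be a density operator on ℂ^d with spectrum r, and ε₁ > 0. Let P_X(k) be the sum of Schur–Weyl projectors P_λ over partitions λ of k with Σ_i |λ_i/k − r_i| < ε₁. Then for every ε₂ > 0 there exists k₀ such that for all k ≥ k₀, tr(P_X(k) ρ^{⊗k}) > 1 − ε₂. -/
open Matrix Finset Nat ComplexOrder

noncomputable section

/-- The cells of the Young diagram of `lam` (rows indexed `0, …, d−1`). -/
def youngCells (d k : ℕ) (lam : ℕ → ℕ) : Finset (ℕ × ℕ) :=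
  (range d ×ˢ range k).filter fun c => c.2 < lam c.1

/-- The matrix of the action of the permutation `π ∈ S_k` on `(ℂ^d)^{⊗k}`, permuting
the tensor factors: basis vectors are indexed by functions `Fin k → Fin d`. -/
def permMat (d k : ℕ) (π : Equiv.Perm (Fin k)) :
    Matrix (Fin k → Fin d) (Fin k → Fin d) ℂ :=
  Matrix.of fun v w => if v = w ∘ ⇑π⁻¹ then 1 else 0

/-- The Young symmetry operator `e(T)` of a tableau, acting on `(ℂ^d)^{⊗k}`:
the signed sum over the column group times the sum over the row group, where the tableau is
given as a numbering `t : Fin k → ℕ × ℕ` of the boxes. -/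
def youngSymMat (d k : ℕ) (t : Fin k → ℕ × ℕ) :
    Matrix (Fin k → Fin d) (Fin k → Fin d) ℂ :=
  (∑ π ∈ univ.filter (fun π : Equiv.Perm (Fin k) => ∀ j, (t (π j)).2 = (t j).2),
      (((Equiv.Perm.sign π : ℤ) : ℂ) • permMat d k π)) *
    ∑ π ∈ univ.filter (fun π : Equiv.Perm (Fin k) => ∀ j, (t (π j)).1 = (t j).1),
      permMat d k π

/-- The `lam`-isotypic component `U_lam ⊗ V_lam` of `(ℂ^d)^{⊗k}` in the Schur–Weyl
decomposition: the span of the `S_k`-translates of the images of the Young symmetry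
operators of tableaux of shape `lam`. -/
def isotypic (d k : ℕ) (lam : ℕ → ℕ) : Submodule ℂ ((Fin k → Fin d) → ℂ) :=
  Submodule.span ℂ {x | ∃ t : Fin k → ℕ × ℕ,
    Set.BijOn t Set.univ ↑(youngCells d k lam) ∧
    ∃ (π : Equiv.Perm (Fin k)) (v : (Fin k → Fin d) → ℂ),
      x = (permMat d k π).mulVec ((youngSymMat d k t).mulVec v)}

/-- The `k`-fold tensor power `ρ^{⊗k}` of a matrix `ρ` on `ℂ^d`. -/
def tensorPow (d k : ℕ) (ρ : Matrix (Fin d) (Fin d) ℂ) :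
    Matrix (Fin k → Fin d) (Fin k → Fin d) ℂ :=
  Matrix.of fun v w => ∏ j, ρ (v j) (w j)

open scoped Classical

/-!
The projections `P_λ` onto the isotypic components sum to `1`, so `Q(λ) = tr(P_λ ρ^{⊗k})` is a
probability distribution on partitions of `k`. In an eigenbasis of `ρ` it is the average of the
diagonal entries `P_λ(w, w)` over words `w` of `k` independent letters with law `r`, and two facts
about these entries suffice.

* If `P_λ(w, w) ≠ 0`, then at most `λ_0 + ⋯ + λ_{i-1}` letters of `w` are smaller than `i`, because
  the column antisymmetrizer kills words with a repeated letter in a column. Hence the partial sums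
  of `E_Q[λ]` dominate those of `k r`.
* The sum of the swaps of all ordered pairs of positions acts on the `λ`-component by a scalar that
  is at least `∑ λ_i² - k d`, while its diagonal entry at `w` counts the pairs of equal letters.
  Hence `E_Q[∑ λ_i²] ≤ k² ∑ r_i² + k (d + 1)`.

As `r` is decreasing, Abel summation turns the first fact into `∑ r_i E_Q[λ_i] ≥ k ∑ r_i²`, so that
`E_Q[∑ (λ_i - k r_i)²] ≤ k (d + 1)`, and Chebyshev's inequality concludes.
-/

namespace SchurWeyl

section GroupAlgebra

open MonoidAlgebra HopfAlgebra

variable {𝕜 G : Type*} [Group G]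

lemma mem_center_of_forall_commute_of [CommRing 𝕜] {x : MonoidAlgebra 𝕜 G}
    (hx : ∀ g, of 𝕜 G g * x = x * of 𝕜 G g) : x ∈ Subalgebra.center 𝕜 (MonoidAlgebra 𝕜 G) := by
  refine Subalgebra.mem_center_iff.2 fun y ↦ ?_
  induction y using MonoidAlgebra.induction_on with
  | of g => exact hx g
  | add y z hy hz => rw [add_mul, mul_add, hy, hz]
  | smul c y hy => rw [smul_mul_assoc, mul_smul_comm, hy]

lemma coeff_eq_of_isConj [CommRing 𝕜] {x : MonoidAlgebra 𝕜 G}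
    (hx : x ∈ Subalgebra.center 𝕜 (MonoidAlgebra 𝕜 G)) {g h : G} (hgh : IsConj g h) :
    x.coeff g = x.coeff h := by
  obtain ⟨c, rfl⟩ := isConj_iff.1 hgh
  have hc := Subalgebra.mem_center_iff.1 hx (single c 1)
  simpa [coeff_single_mul_apply, coeff_mul_single_apply] using
    congrArg (fun y ↦ y.coeff (c * g)) hc

lemma coeff_antipode [CommRing 𝕜] (x : MonoidAlgebra 𝕜 G) (g : G) :
    (antipode 𝕜 x).coeff g = x.coeff g⁻¹ := by
  induction x using MonoidAlgebra.induction_on with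
  | of h => simp [MonoidAlgebra.of_apply, antipode_single, Finsupp.single_apply, inv_eq_iff_eq_inv]
  | add x y hx hy => simp [hx, hy]
  | smul c x hx => simp [hx]

lemma antipode_antipode [CommRing 𝕜] (x : MonoidAlgebra 𝕜 G) :
    antipode 𝕜 (antipode 𝕜 x) = x := by
  ext g
  simp [coeff_antipode]

lemma coeff_one_mul_antipode_pos [Field 𝕜] [LinearOrder 𝕜] [IsStrictOrderedRing 𝕜]
    {x : MonoidAlgebra 𝕜 G} (hx : x ≠ 0) : 0 < (x * antipode 𝕜 x).coeff 1 := by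
  have coeff_one : (x * antipode 𝕜 x).coeff 1 = ∑ g ∈ x.coeff.support, x.coeff g * x.coeff g := by
    simp [coeff_mul_apply_left, coeff_antipode, Finsupp.sum]
  rw [coeff_one]
  refine Finset.sum_pos (fun g hg ↦ mul_self_pos.2 (Finsupp.mem_support_iff.1 hg)) ?_
  simpa [Finsupp.support_nonempty_iff] using hx

variable [Fintype G]

/-- The sum of the conjugates of `x` by all group elements, a projection of the group algebra
onto its centre up to the factor `|G|`. -/
def conjSum [CommRing 𝕜] (x : MonoidAlgebra 𝕜 G) : MonoidAlgebra 𝕜 G :=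
  ∑ g, of 𝕜 G g * x * of 𝕜 G g⁻¹

lemma conjSum_mem_center [CommRing 𝕜] (x : MonoidAlgebra 𝕜 G) :
    conjSum x ∈ Subalgebra.center 𝕜 (MonoidAlgebra 𝕜 G) := by
  refine mem_center_of_forall_commute_of fun h ↦ ?_
  rw [conjSum, Finset.mul_sum, Finset.sum_mul]
  refine Fintype.sum_equiv (Equiv.mulLeft h) _ _ fun g ↦ ?_
  simp only [Equiv.coe_mulLeft, map_mul, _root_.mul_inv_rev, mul_assoc]
  rw [← map_mul, inv_mul_cancel, map_one, mul_one]

lemma coeff_one_conjSum [CommRing 𝕜] (x : MonoidAlgebra 𝕜 G) :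
    (conjSum x).coeff 1 = Fintype.card G * x.coeff 1 := by
  simp [conjSum, MonoidAlgebra.of_apply, coeff_sum, coeff_single_mul_apply, coeff_mul_single_apply]

lemma antipode_conjSum [CommRing 𝕜] (x : MonoidAlgebra 𝕜 G) :
    antipode 𝕜 (conjSum x) = conjSum (antipode 𝕜 x) := by
  simp [conjSum, antipode_mul_antidistrib, MonoidAlgebra.of_apply, antipode_single, mul_assoc]

lemma conjSum_mul_self_ne_zero [Field 𝕜] [LinearOrder 𝕜] [IsStrictOrderedRing 𝕜]
    {x : MonoidAlgebra 𝕜 G} (hx : x ≠ 0) :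
    conjSum (x * antipode 𝕜 x) * conjSum (x * antipode 𝕜 x) ≠ 0 := by
  set z := conjSum (x * antipode 𝕜 x) with hz_def
  have hz : z ≠ 0 := by
    intro h0
    have h1 := coeff_one_conjSum (x * antipode 𝕜 x)
    rw [← hz_def, h0] at h1
    have h2 : (Fintype.card G : 𝕜) * (x * antipode 𝕜 x).coeff 1 ≠ 0 :=
      mul_ne_zero (by simp) (coeff_one_mul_antipode_pos hx).ne'
    exact h2 (by simpa using h1.symm)
  have hz_fixed : antipode 𝕜 z = z := by
    rw [hz_def, antipode_conjSum, antipode_mul_antidistrib, antipode_antipode]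
  intro h0
  have := coeff_one_mul_antipode_pos hz
  simp [hz_fixed, h0] at this

lemma conjSum_mul_eq_zero [CommRing 𝕜] {x y : MonoidAlgebra 𝕜 G} (h : ∀ u, x * u * y = 0)
    (x' : MonoidAlgebra 𝕜 G) : conjSum (x * x') * y = 0 := by
  rw [conjSum, Finset.sum_mul]
  refine Finset.sum_eq_zero fun g _ ↦ ?_
  calc of 𝕜 G g * (x * x') * of 𝕜 G g⁻¹ * y = of 𝕜 G g * (x * (x' * of 𝕜 G g⁻¹) * y) := by
        simp only [mul_assoc]
    _ = 0 := by rw [h, mul_zero]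

lemma conjSum_mul_conjSum_eq_zero [CommRing 𝕜] {x y : MonoidAlgebra 𝕜 G}
    (h : ∀ u, x * u * y = 0) (x' y' : MonoidAlgebra 𝕜 G) :
    conjSum (x * x') * conjSum (y * y') = 0 := by
  rw [conjSum.eq_def (y * y'), Finset.mul_sum]
  refine Finset.sum_eq_zero fun g _ ↦ ?_
  rw [← mul_assoc, ← mul_assoc, ← mul_assoc,
    ← Subalgebra.mem_center_iff.1 (conjSum_mem_center (x * x')) (of 𝕜 G g),
    mul_assoc (of 𝕜 G g), conjSum_mul_eq_zero h, mul_zero, zero_mul, zero_mul]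

lemma finrank_center_le_card_conjClasses [Field 𝕜] :
    Module.finrank 𝕜 (Subalgebra.center 𝕜 (MonoidAlgebra 𝕜 G)) ≤ Fintype.card (ConjClasses G) := by
  let coeffs : Subalgebra.center 𝕜 (MonoidAlgebra 𝕜 G) →ₗ[𝕜] ConjClasses G → 𝕜 :=
    { toFun := fun x C ↦ x.1.coeff C.out
      map_add' := fun _ _ ↦ rfl
      map_smul' := fun _ _ ↦ rfl }
  have coeffs_injective : Function.Injective coeffs := by
    intro x y hxy
    ext g
    have hg : IsConj g (ConjClasses.mk g).out :=
      ConjClasses.mk_eq_mk_iff_isConj.1 (Quotient.out_eq (ConjClasses.mk g)).symm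
    rw [coeff_eq_of_isConj x.2 hg, coeff_eq_of_isConj y.2 hg]
    exact congrFun hxy (ConjClasses.mk g)
  simpa using LinearMap.finrank_le_finrank_of_injective coeffs_injective

end GroupAlgebra

lemma linearIndependent_of_mul_eq_zero {𝕜 A ι : Type*} [Field 𝕜] [Ring A] [Algebra 𝕜 A]
    {z : ι → A} (hz : ∀ i, z i * z i ≠ 0) (hz_orth : Pairwise fun i j ↦ z i * z j = 0) :
    LinearIndependent 𝕜 z := by
  refine linearIndependent_iff'.2 fun s c hc i hi ↦ ?_
  have h : c i • (z i * z i) = 0 := by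
    rw [← mul_smul_comm, ← Finset.sum_eq_single_of_mem (f := fun j ↦ z i * (c j • z j)) i hi,
      ← Finset.mul_sum, hc, mul_zero]
    intro j _ hji
    rw [mul_smul_comm, hz_orth hji.symm, smul_zero]
  exact (smul_eq_zero.1 h).resolve_right (hz i)

lemma one_mem_span_of_linearIndependent_center {𝕜 G : Type*} [Field 𝕜] [Group G] [Finite G]
    {z : ConjClasses G → MonoidAlgebra 𝕜 G} (hz : LinearIndependent 𝕜 z)
    (hz_center : ∀ C, z C ∈ Subalgebra.center 𝕜 (MonoidAlgebra 𝕜 G)) :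
    1 ∈ Submodule.span 𝕜 (Set.range z) := by
  have := Fintype.ofFinite G
  have span_eq : Submodule.span 𝕜 (Set.range z) =
      Subalgebra.toSubmodule (Subalgebra.center 𝕜 (MonoidAlgebra 𝕜 G)) := by
    refine Submodule.eq_of_le_of_finrank_le ?_ ?_
    · rw [Submodule.span_le]
      rintro _ ⟨C, rfl⟩
      exact hz_center C
    · rw [finrank_span_eq_card hz]
      exact finrank_center_le_card_conjClasses
  rw [span_eq]
  exact one_mem (Subalgebra.center 𝕜 (MonoidAlgebra 𝕜 G))

section TwistedSum

open MonoidAlgebra HopfAlgebra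

variable {𝕜 G : Type*} [Group G] [Fintype G]

/-- The sum of the elements of the subgroup `H` weighted by the linear character `χ`. For the
symmetric group it gives row symmetrizers (`χ = 1`) and column antisymmetrizers (`χ` the sign). -/
def twistedSum [CommRing 𝕜] (χ : G →* 𝕜) (H : Subgroup G) : MonoidAlgebra 𝕜 G :=
  ∑ h with h ∈ H, χ h • of 𝕜 G h

variable {H K : Subgroup G}

lemma coeff_twistedSum [CommRing 𝕜] (χ : G →* 𝕜) (g : G) :
    (twistedSum χ H).coeff g = if g ∈ H then χ g else 0 := by
  simp [twistedSum, MonoidAlgebra.of_apply, coeff_sum, Finsupp.single_apply]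

lemma of_mul_twistedSum [CommRing 𝕜] (χ : G →* 𝕜) {h : G} (hh : h ∈ H) :
    of 𝕜 G h * twistedSum χ H = χ h⁻¹ • twistedSum χ H := by
  ext g
  simp [MonoidAlgebra.of_apply, coeff_single_mul_apply, coeff_twistedSum,
    H.mul_mem_cancel_left (H.inv_mem hh)]

lemma twistedSum_mul_of [CommRing 𝕜] (χ : G →* 𝕜) {h : G} (hh : h ∈ H) :
    twistedSum χ H * of 𝕜 G h = χ h⁻¹ • twistedSum χ H := by
  ext g
  simp [MonoidAlgebra.of_apply, coeff_mul_single_apply, coeff_twistedSum,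
    H.mul_mem_cancel_right (H.inv_mem hh), mul_comm]

lemma of_mul_twistedSum_eq_twistedSum_mul_of [CommRing 𝕜] (χ : G →* 𝕜) {g : G}
    (hg : ∀ x, x ∈ K ↔ g⁻¹ * x * g ∈ H) :
    of 𝕜 G g * twistedSum χ H = twistedSum χ K * of 𝕜 G g := by
  ext x
  simp [MonoidAlgebra.of_apply, coeff_single_mul_apply, coeff_mul_single_apply, coeff_twistedSum,
    hg, mul_assoc, mul_comm]

lemma twistedSum_mul_twistedSum_eq_zero [Field 𝕜] {χ ψ : G →* 𝕜} {g : G} (hgH : g ∈ H)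
    (hgK : g ∈ K) (hg : χ g ≠ ψ g) : twistedSum χ H * twistedSum ψ K = 0 := by
  have hinv : χ g⁻¹ • (twistedSum χ H * twistedSum ψ K) =
      ψ g⁻¹ • (twistedSum χ H * twistedSum ψ K) := by
    rw [← smul_mul_assoc, ← twistedSum_mul_of χ hgH, mul_assoc, of_mul_twistedSum ψ hgK,
      mul_smul_comm]
  by_contra h0
  exact hg (by simpa using smul_left_injective 𝕜 h0 hinv)

lemma coeff_one_twistedSum_mul_twistedSum [CommRing 𝕜] (χ ψ : G →* 𝕜) (hHK : Disjoint H K) :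
    (twistedSum χ H * twistedSum ψ K).coeff 1 = 1 := by
  rw [coeff_mul_apply_left, Finsupp.sum_fintype _ _ (by simp), Finset.sum_eq_single 1]
  · simp [coeff_twistedSum]
  · intro h _ h1
    have : ¬ (h ∈ H ∧ h ∈ K) := fun hh ↦ h1 (Subgroup.disjoint_def.1 hHK hh.1 hh.2)
    simp only [coeff_twistedSum, mul_one, inv_mem_iff]
    split_ifs <;> simp_all
  · simp

end TwistedSum

section Tableau

variable {α : Type*}

/-- `t` is a tableau of shape `lam` with entries in `α`: it numbers the boxes `(row, column)` of
the diagram with row lengths `lam` bijectively. -/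
def IsTableau (lam : ℕ → ℕ) (t : α → ℕ × ℕ) : Prop :=
  Set.BijOn t Set.univ {c | c.2 < lam c.1}

/-- The dominance order on shapes, by comparison of the sums of the first rows. -/
def DominatedBy (lam mu : ℕ → ℕ) : Prop :=
  ∀ i, ∑ j ∈ range i, lam j ≤ ∑ j ∈ range i, mu j

lemma DominatedBy.antisymm {lam mu : ℕ → ℕ} (h : DominatedBy lam mu) (h' : DominatedBy mu lam) :
    lam = mu := by
  funext i
  have h1 := (h i).antisymm (h' i)
  have h2 := (h (i + 1)).antisymm (h' (i + 1))
  simp only [Finset.sum_range_succ] at h2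
  omega

lemma card_filter_lt_le_of_isLowerSet_image {s : Finset α} {f w : α → ℕ}
    (hf : IsLowerSet (f '' s)) (hw : Set.InjOn w s) (i : ℕ) :
    #{a ∈ s | w a < i} ≤ #{a ∈ s | f a < i} := by
  by_cases h : ∀ a ∈ s, f a < i
  · rw [filter_true_of_mem h]
    exact card_filter_le _ _
  push Not at h
  obtain ⟨a, ha, hai⟩ := h
  calc #{a ∈ s | w a < i} ≤ #(range i) := by
        refine card_le_card_of_injOn w (fun b hb ↦ ?_) (hw.mono fun b hb ↦ ?_) <;> simp_all
    _ ≤ #(image f {a ∈ s | f a < i}) := by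
        refine card_le_card fun j hj ↦ ?_
        have hji := mem_range.1 hj
        obtain ⟨b, hb, rfl⟩ := hf (hji.le.trans hai) (Set.mem_image_of_mem f ha)
        exact mem_image_of_mem f (mem_filter.2 ⟨hb, hji⟩)
    _ ≤ #{a ∈ s | f a < i} := card_image_le

namespace IsTableau

variable {lam mu : ℕ → ℕ} {t s : α → ℕ × ℕ}

lemma injective (ht : IsTableau lam t) : Function.Injective t := Set.injOn_univ.1 ht.injOn

lemma snd_lt (ht : IsTableau lam t) (a : α) : (t a).2 < lam (t a).1 := ht.mapsTo (Set.mem_univ a)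

lemma exists_apply_eq (ht : IsTableau lam t) {i j : ℕ} (h : j < lam i) : ∃ a, t a = (i, j) := by
  obtain ⟨a, -, ha⟩ := ht.surjOn (show (i, j) ∈ {c : ℕ × ℕ | c.2 < lam c.1} from h)
  exact ⟨a, ha⟩

lemma fst_lt (ht : IsTableau lam t) {d : ℕ} (hd : ∀ i, d ≤ i → lam i = 0) (a : α) :
    (t a).1 < d := by
  by_contra! h
  simpa [hd _ h] using ht.snd_lt a

lemma comp_perm (ht : IsTableau lam t) (g : Equiv.Perm α) : IsTableau lam (t ∘ g) :=
  Set.BijOn.comp ht (Set.bijOn_univ.2 g.bijective)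

lemma exists_perm [Finite α] (ht : IsTableau lam t) (hs : IsTableau lam s) :
    ∃ g : Equiv.Perm α, s = t ∘ g := by
  choose g hg using fun a ↦ ht.exists_apply_eq (hs.snd_lt a)
  have hg_inj : Function.Injective g := fun a b hab ↦
    hs.injective (by simpa [hg] using congrArg t hab)
  exact ⟨Equiv.ofBijective g (Finite.injective_iff_bijective.1 hg_inj),
    funext fun a ↦ (hg a).symm⟩

section Card

variable [Fintype α]

lemma card_row (ht : IsTableau lam t) (i : ℕ) : #{a | (t a).1 = i} = lam i := by
  rw [← card_range (lam i)]
  refine card_bij (fun a _ ↦ (t a).2) ?_ ?_ ?_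
  · intro a ha
    obtain rfl := (mem_filter.1 ha).2
    exact mem_range.2 (ht.snd_lt a)
  · intro a ha b hb hab
    exact ht.injective (Prod.ext ((mem_filter.1 ha).2.trans (mem_filter.1 hb).2.symm) hab)
  · intro j hj
    obtain ⟨a, ha⟩ := ht.exists_apply_eq (mem_range.1 hj)
    exact ⟨a, by simp [ha], by simp [ha]⟩

lemma card_rows_lt (ht : IsTableau lam t) (i : ℕ) :
    #{a | (t a).1 < i} = ∑ j ∈ range i, lam j := by
  rw [card_eq_sum_card_fiberwise (f := fun a ↦ (t a).1) (t := range i) (by intro a; simp)]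
  refine sum_congr rfl fun j hj ↦ ?_
  rw [← ht.card_row j, filter_filter]
  congr 1
  ext a
  have := mem_range.1 hj
  simp only [mem_filter, mem_univ, true_and]
  omega

lemma isLowerSet_column (hlam : Antitone lam) (ht : IsTableau lam t) (c : ℕ) :
    IsLowerSet ((fun a ↦ (t a).1) '' ({a | (t a).2 = c} : Finset α)) := by
  rintro _ i hi ⟨a, ha, rfl⟩
  obtain rfl := (mem_filter.1 ha).2
  obtain ⟨b, hb⟩ := ht.exists_apply_eq ((ht.snd_lt a).trans_le (hlam hi))
  exact ⟨b, by simp [hb], by simp [hb]⟩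

lemma card_filter_lt_le (hlam : Antitone lam) (ht : IsTableau lam t) {w : α → ℕ}
    (hw : ∀ a b, a ≠ b → (t a).2 = (t b).2 → w a ≠ w b) (i : ℕ) :
    #{a | w a < i} ≤ ∑ j ∈ range i, lam j := by
  rw [← ht.card_rows_lt i]
  have maps (s : Finset α) : Set.MapsTo (fun a ↦ (t a).2) s (univ.image fun a ↦ (t a).2) :=
    fun a _ ↦ by simp
  rw [card_eq_sum_card_fiberwise (maps _), card_eq_sum_card_fiberwise (maps _)]
  refine sum_le_sum fun c _ ↦ ?_
  rw [filter_comm, filter_comm (fun a ↦ (t a).1 < i)]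
  refine card_filter_lt_le_of_isLowerSet_image (isLowerSet_column hlam ht c) ?_ i
  intro a ha b hb hab
  by_contra hne
  exact hw a b hne ((mem_filter.1 ha).2.trans (mem_filter.1 hb).2.symm) hab

end Card

lemma dominatedBy [Finite α] (hmu : Antitone mu) (ht : IsTableau lam t) (hs : IsTableau mu s)
    (h : ∀ a b, a ≠ b → (t a).1 = (t b).1 → (s a).2 ≠ (s b).2) : DominatedBy lam mu := by
  have := Fintype.ofFinite α
  intro i
  rw [← ht.card_rows_lt i]
  exact hs.card_filter_lt_le hmu (fun a b hab hcol hrow ↦ h a b hab hrow hcol) i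

end IsTableau

lemma card_filter_prod_eq [Fintype α] {β : Type*} [DecidableEq β] {f : α → β} {s : Finset β}
    (hf : ∀ a, f a ∈ s) : #{p : α × α | f p.1 = f p.2} = ∑ b ∈ s, #{a | f a = b} ^ 2 := by
  rw [card_eq_sum_card_fiberwise (f := fun p ↦ f p.1) (t := s) (fun p _ ↦ hf p.1)]
  refine sum_congr rfl fun b _ ↦ ?_
  rw [sq, ← card_product, filter_filter]
  congr 1
  ext p
  simp only [mem_filter, mem_univ, true_and, mem_product]
  aesop

/-- The number of ordered pairs of entries of `t` in a common row minus the number of ordered pairs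
of distinct entries in a common column: the eigenvalue of the sum of all transpositions
`swap a b`, `a, b ∈ α`, on the Young symmetrizer of `t`. -/
def content [Fintype α] (t : α → ℕ × ℕ) : ℤ :=
  ∑ p : α × α, if (t p.1).1 = (t p.2).1 then 1 else if (t p.1).2 = (t p.2).2 then -1 else 0

lemma content_comp_perm [Fintype α] (t : α → ℕ × ℕ) (g : Equiv.Perm α) :
    content (t ∘ g) = content t :=
  Fintype.sum_equiv (Equiv.prodCongr g g) _ _ fun _ ↦ rfl

lemma IsTableau.sum_sq_sub_le_content [Fintype α] {lam : ℕ → ℕ} {t : α → ℕ × ℕ}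
    (ht : IsTableau lam t) {d : ℕ} (hd : ∀ i, d ≤ i → lam i = 0) :
    ∑ i ∈ range d, (lam i : ℤ) ^ 2 - Fintype.card α * d ≤ content t := by
  have row_pairs : #{p : α × α | (t p.1).1 = (t p.2).1} = ∑ i ∈ range d, lam i ^ 2 := by
    rw [card_filter_prod_eq (f := fun a ↦ (t a).1) (fun a ↦ mem_range.2 (ht.fst_lt hd a))]
    exact sum_congr rfl fun i _ ↦ by rw [ht.card_row i]
  have column_pairs : #{p : α × α | (t p.1).2 = (t p.2).2} ≤ Fintype.card α * d := by
    rw [← Finset.card_univ, ← card_range d, ← card_product]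
    refine card_le_card_of_injOn (fun p ↦ (p.1, (t p.2).1))
      (fun p _ ↦ by simpa using ht.fst_lt hd p.2) ?_
    rintro ⟨a, b⟩ hp ⟨a', b'⟩ hq hpq
    simp only [coe_filter, mem_univ, true_and, Set.mem_ofPred_eq, Prod.mk.injEq] at hp hq hpq
    obtain ⟨rfl, hrow⟩ := hpq
    rw [ht.injective (Prod.ext hrow (hp.symm.trans hq))]
  calc ∑ i ∈ range d, (lam i : ℤ) ^ 2 - Fintype.card α * d
      ≤ #{p : α × α | (t p.1).1 = (t p.2).1} - #{p : α × α | (t p.1).2 = (t p.2).2} := by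
        rw [row_pairs]
        push_cast
        gcongr
        exact_mod_cast column_pairs
    _ = ∑ p : α × α, ((if (t p.1).1 = (t p.2).1 then 1 else 0) -
          if (t p.1).2 = (t p.2).2 then 1 else 0) := by
        rw [sum_sub_distrib, sum_boole, sum_boole]
    _ ≤ content t := sum_le_sum fun p _ ↦ by split_ifs <;> simp

end Tableau

section YoungSymmetrizer

open MonoidAlgebra HopfAlgebra

variable {α β : Type*}

/-- The Young subgroup of the permutations that preserve the fibres of `f`. -/
def fiberPerms (f : α → β) : Subgroup (Equiv.Perm α) where
  carrier := {π | ∀ a, f (π a) = f a}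
  one_mem' _ := rfl
  mul_mem' hπ hσ a := (hπ _).trans (hσ a)
  inv_mem' {π} hπ a := by simpa using (hπ (π⁻¹ a)).symm

lemma mem_fiberPerms {f : α → β} {π : Equiv.Perm α} : π ∈ fiberPerms f ↔ ∀ a, f (π a) = f a :=
  Iff.rfl

lemma mem_fiberPerms_comp_inv {f : α → β} {g π : Equiv.Perm α} :
    π ∈ fiberPerms (f ∘ ⇑g⁻¹) ↔ g⁻¹ * π * g ∈ fiberPerms f := by
  refine ⟨fun h a ↦ by simpa using h (g a), fun h a ↦ by simpa using h (g⁻¹ a)⟩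

lemma disjoint_fiberPerms {γ : Type*} {f : α → β} {f' : α → γ}
    (h : Function.Injective fun a ↦ (f a, f' a)) : Disjoint (fiberPerms f) (fiberPerms f') :=
  Subgroup.disjoint_def.2 fun hf hf' ↦ Equiv.ext fun a ↦ h (Prod.ext (hf a) (hf' a))

variable [DecidableEq α]

lemma swap_mem_fiberPerms (f : α → β) {a b : α} (h : f a = f b) :
    Equiv.swap a b ∈ fiberPerms f := by
  intro c
  rw [Equiv.swap_apply_def]
  split_ifs with hca hcb <;> simp_all

variable [Fintype α] {𝕜 : Type*} {t s : α → ℕ × ℕ} {lam mu : ℕ → ℕ}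

section CommRing

variable (𝕜) [CommRing 𝕜]

/-- The sign of a permutation as a linear character with values in `𝕜`. -/
def signChar : Equiv.Perm α →* 𝕜 :=
  ((Int.castRingHom 𝕜 : ℤ →* 𝕜).comp (Units.coeHom ℤ)).comp Equiv.Perm.sign

lemma signChar_apply (π : Equiv.Perm α) : signChar 𝕜 π = ((Equiv.Perm.sign π : ℤ) : 𝕜) := rfl

/-- The row symmetrizer of the numbering `t` of boxes `(row, column)`. -/
def rowSum (t : α → ℕ × ℕ) : MonoidAlgebra 𝕜 (Equiv.Perm α) :=
  twistedSum 1 (fiberPerms fun a ↦ (t a).1)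

/-- The column antisymmetrizer of the numbering `t` of boxes `(row, column)`. -/
def colSum (t : α → ℕ × ℕ) : MonoidAlgebra 𝕜 (Equiv.Perm α) :=
  twistedSum (signChar 𝕜) (fiberPerms fun a ↦ (t a).2)

/-- The Young symmetrizer of the numbering `t`, with the column antisymmetrizer on the left. -/
def youngSymmetrizer (t : α → ℕ × ℕ) : MonoidAlgebra 𝕜 (Equiv.Perm α) :=
  colSum 𝕜 t * rowSum 𝕜 t

variable {𝕜}

lemma of_mul_rowSum (g : Equiv.Perm α) (t : α → ℕ × ℕ) :
    of 𝕜 _ g * rowSum 𝕜 t = rowSum 𝕜 (t ∘ ⇑g⁻¹) * of 𝕜 _ g :=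
  of_mul_twistedSum_eq_twistedSum_mul_of 1 fun _ ↦ mem_fiberPerms_comp_inv (f := fun a ↦ (t a).1)

lemma of_mul_colSum (g : Equiv.Perm α) (t : α → ℕ × ℕ) :
    of 𝕜 _ g * colSum 𝕜 t = colSum 𝕜 (t ∘ ⇑g⁻¹) * of 𝕜 _ g :=
  of_mul_twistedSum_eq_twistedSum_mul_of (signChar 𝕜) fun _ ↦
    mem_fiberPerms_comp_inv (f := fun a ↦ (t a).2)

lemma of_mul_youngSymmetrizer (g : Equiv.Perm α) (t : α → ℕ × ℕ) :
    of 𝕜 _ g * youngSymmetrizer 𝕜 t = youngSymmetrizer 𝕜 (t ∘ ⇑g⁻¹) * of 𝕜 _ g := by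
  rw [youngSymmetrizer, ← mul_assoc, of_mul_colSum, mul_assoc, of_mul_rowSum, ← mul_assoc,
    ← youngSymmetrizer]

lemma swap_mul_rowSum {a b : α} (hrow : (t a).1 = (t b).1) :
    of 𝕜 _ (Equiv.swap a b) * rowSum 𝕜 t = rowSum 𝕜 t := by
  have h := of_mul_twistedSum (1 : Equiv.Perm α →* 𝕜)
    (swap_mem_fiberPerms (fun a ↦ (t a).1) hrow)
  rwa [MonoidHom.one_apply, one_smul] at h

lemma swap_mul_colSum {a b : α} (hab : a ≠ b) (hcol : (t a).2 = (t b).2) :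
    of 𝕜 _ (Equiv.swap a b) * colSum 𝕜 t = -colSum 𝕜 t := by
  have h := of_mul_twistedSum (signChar 𝕜) (swap_mem_fiberPerms (fun a ↦ (t a).2) hcol)
  simpa [colSum, signChar_apply, Equiv.Perm.sign_swap hab] using h

lemma colSum_mul_swap {a b : α} (hab : a ≠ b) (hcol : (t a).2 = (t b).2) :
    colSum 𝕜 t * of 𝕜 _ (Equiv.swap a b) = -colSum 𝕜 t := by
  have h := twistedSum_mul_of (signChar 𝕜) (swap_mem_fiberPerms (fun a ↦ (t a).2) hcol)
  simpa [colSum, signChar_apply, Equiv.Perm.sign_swap hab] using h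

lemma youngSymmetrizer_ne_zero [Nontrivial 𝕜] (ht : Function.Injective t) :
    youngSymmetrizer 𝕜 t ≠ 0 := by
  have h := coeff_one_twistedSum_mul_twistedSum (signChar 𝕜) 1
    (disjoint_fiberPerms (f := fun a ↦ (t a).2) (f' := fun a ↦ (t a).1)
      fun a b hab ↦ ht (Prod.ext (Prod.ext_iff.1 hab).2 (Prod.ext_iff.1 hab).1))
  intro h0
  rw [← colSum, ← rowSum, ← youngSymmetrizer, h0] at h
  simp at h

/-- The sum of the transpositions over all ordered pairs, the diagonal pairs contributing the
identity: up to scaling and a constant, the Casimir element that controls `∑ᵢ λᵢ²`. -/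
def swapSum (𝕜 α : Type*) [CommRing 𝕜] [Fintype α] [DecidableEq α] :
    MonoidAlgebra 𝕜 (Equiv.Perm α) :=
  ∑ p : α × α, of 𝕜 _ (Equiv.swap p.1 p.2)

lemma swapSum_mem_center :
    swapSum 𝕜 α ∈ Subalgebra.center 𝕜 (MonoidAlgebra 𝕜 (Equiv.Perm α)) := by
  refine mem_center_of_forall_commute_of fun g ↦ ?_
  rw [swapSum, Finset.mul_sum, Finset.sum_mul]
  refine Fintype.sum_equiv (Equiv.prodCongr g g) _ _ fun p ↦ ?_
  rw [← map_mul, ← map_mul, Equiv.mul_swap_eq_swap_mul]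
  rfl

end CommRing

section CharZero

variable [Field 𝕜] [CharZero 𝕜]

lemma signChar_swap_ne_one {a b : α} (hab : a ≠ b) : signChar 𝕜 (Equiv.swap a b) ≠ 1 := by
  rw [signChar_apply, Equiv.Perm.sign_swap hab]
  norm_num

lemma rowSum_mul_colSum_eq_zero {a b : α} (hab : a ≠ b) (hrow : (t a).1 = (t b).1)
    (hcol : (s a).2 = (s b).2) : rowSum 𝕜 t * colSum 𝕜 s = 0 :=
  twistedSum_mul_twistedSum_eq_zero (swap_mem_fiberPerms (fun a ↦ (t a).1) hrow)
    (swap_mem_fiberPerms (fun a ↦ (s a).2) hcol)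
    (signChar_swap_ne_one hab).symm

lemma colSum_mul_rowSum_eq_zero {a b : α} (hab : a ≠ b) (hcol : (s a).2 = (s b).2)
    (hrow : (t a).1 = (t b).1) : colSum 𝕜 s * rowSum 𝕜 t = 0 :=
  twistedSum_mul_twistedSum_eq_zero (swap_mem_fiberPerms (fun a ↦ (s a).2) hcol)
    (swap_mem_fiberPerms (fun a ↦ (t a).1) hrow)
    (signChar_swap_ne_one hab)

lemma rowSum_mul_mul_colSum_eq_zero (hmu : Antitone mu) (ht : IsTableau lam t)
    (hs : IsTableau mu s) (h : ¬ DominatedBy lam mu) (x : MonoidAlgebra 𝕜 (Equiv.Perm α)) :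
    rowSum 𝕜 t * x * colSum 𝕜 s = 0 := by
  induction x using MonoidAlgebra.induction_on with
  | of g =>
    contrapose! h
    refine ht.dominatedBy hmu (hs.comp_perm g⁻¹) fun a b hab hrow hcol ↦ h ?_
    rw [mul_assoc, of_mul_colSum, ← mul_assoc, rowSum_mul_colSum_eq_zero hab hrow hcol, zero_mul]
  | add x y hx hy => rw [mul_add, add_mul, hx, hy, add_zero]
  | smul c x hx => rw [mul_smul_comm, smul_mul_assoc, hx, smul_zero]

lemma colSum_mul_mul_rowSum_eq_zero (hmu : Antitone mu) (ht : IsTableau lam t)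
    (hs : IsTableau mu s) (h : ¬ DominatedBy lam mu) (x : MonoidAlgebra 𝕜 (Equiv.Perm α)) :
    colSum 𝕜 s * x * rowSum 𝕜 t = 0 := by
  induction x using MonoidAlgebra.induction_on with
  | of g =>
    contrapose! h
    refine (ht.comp_perm g⁻¹).dominatedBy hmu hs fun a b hab hrow hcol ↦ h ?_
    rw [mul_assoc, of_mul_rowSum, ← mul_assoc, colSum_mul_rowSum_eq_zero hab hcol hrow, zero_mul]
  | add x y hx hy => rw [mul_add, add_mul, hx, hy, add_zero]
  | smul c x hx => rw [mul_smul_comm, smul_mul_assoc, hx, smul_zero]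

lemma youngSymmetrizer_mul_mul_youngSymmetrizer_eq_zero (hlam : Antitone lam) (hmu : Antitone mu)
    (hne : lam ≠ mu) (ht : IsTableau lam t) (hs : IsTableau mu s)
    (x : MonoidAlgebra 𝕜 (Equiv.Perm α)) :
    youngSymmetrizer 𝕜 t * x * youngSymmetrizer 𝕜 s = 0 := by
  by_cases h : DominatedBy lam mu
  · have h' : ¬ DominatedBy mu lam := fun h' ↦ hne (h.antisymm h')
    have := colSum_mul_mul_rowSum_eq_zero hlam hs ht h' (rowSum 𝕜 t * x * colSum 𝕜 s)
    simpa only [youngSymmetrizer, mul_assoc] using this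
  · have := rowSum_mul_mul_colSum_eq_zero hmu ht hs h x
    calc youngSymmetrizer 𝕜 t * x * youngSymmetrizer 𝕜 s
        = colSum 𝕜 t * (rowSum 𝕜 t * x * colSum 𝕜 s) * rowSum 𝕜 s := by
          simp only [youngSymmetrizer, mul_assoc]
      _ = 0 := by rw [this, mul_zero, zero_mul]

-- The box in the row of `a` and the column of `b` belongs to the diagram; its entry shares a column
-- with `b`, and after the swap a row as well.
lemma colSum_mul_swap_mul_rowSum_eq_zero (hlam : Antitone lam) (ht : IsTableau lam t) {a b : α}
    (hrow : (t a).1 < (t b).1) (hcol : (t a).2 ≠ (t b).2) :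
    colSum 𝕜 t * of 𝕜 _ (Equiv.swap a b) * rowSum 𝕜 t = 0 := by
  obtain ⟨c, hc⟩ := ht.exists_apply_eq ((ht.snd_lt b).trans_le (hlam hrow.le))
  have hca : c ≠ a := by
    rintro rfl
    exact hcol (by rw [hc])
  have hcb : c ≠ b := by
    rintro rfl
    exact hrow.ne (by rw [hc])
  rw [mul_assoc, of_mul_rowSum, ← mul_assoc,
    colSum_mul_rowSum_eq_zero hcb (by rw [hc]) ?_, zero_mul]
  simp [Equiv.swap_apply_of_ne_of_ne hca hcb, hc]

lemma colSum_mul_swap_mul_rowSum (hlam : Antitone lam) (ht : IsTableau lam t) (a b : α) :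
    colSum 𝕜 t * of 𝕜 _ (Equiv.swap a b) * rowSum 𝕜 t =
      (if (t a).1 = (t b).1 then 1 else if (t a).2 = (t b).2 then -1 else 0 : ℤ) •
        youngSymmetrizer 𝕜 t := by
  split_ifs with hrow hcol
  · rw [mul_assoc, swap_mul_rowSum hrow, one_smul, youngSymmetrizer]
  · have hab : a ≠ b := by
      rintro rfl
      exact hrow rfl
    rw [colSum_mul_swap hab hcol, neg_smul, one_smul, neg_mul, youngSymmetrizer]
  · rw [zero_smul]
    rcases lt_or_gt_of_ne hrow with hlt | hgt
    · exact colSum_mul_swap_mul_rowSum_eq_zero hlam ht hlt hcol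
    · rw [Equiv.swap_comm]
      exact colSum_mul_swap_mul_rowSum_eq_zero hlam ht hgt (Ne.symm hcol)

lemma swapSum_mul_youngSymmetrizer (hlam : Antitone lam) (ht : IsTableau lam t) :
    swapSum 𝕜 α * youngSymmetrizer 𝕜 t = content t • youngSymmetrizer 𝕜 t :=
  calc swapSum 𝕜 α * youngSymmetrizer 𝕜 t
      = colSum 𝕜 t * swapSum 𝕜 α * rowSum 𝕜 t := by
        rw [youngSymmetrizer, ← mul_assoc, Subalgebra.mem_center_iff.1 swapSum_mem_center]
    _ = ∑ p : α × α, colSum 𝕜 t * of 𝕜 _ (Equiv.swap p.1 p.2) * rowSum 𝕜 t := by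
        rw [swapSum, Finset.mul_sum, Finset.sum_mul]
    _ = content t • youngSymmetrizer 𝕜 t := by
        rw [content, Finset.sum_smul]
        exact sum_congr rfl fun p _ ↦ colSum_mul_swap_mul_rowSum hlam ht p.1 p.2

end CharZero

end YoungSymmetrizer

section Completeness

open YoungDiagram

lemma card_ofRowLens (w : List ℕ) (hw : w.SortedGE) : (ofRowLens w hw).card = w.sum := by
  change #(YoungDiagram.cellsOfRowLens w) = w.sum
  clear hw
  induction w with
  | nil => rfl
  | cons n w ih =>
    have first_row_disjoint : Disjoint (({0} : Finset ℕ) ×ˢ range n)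
        ((YoungDiagram.cellsOfRowLens w).map
          (.prodMap ⟨_, Nat.succ_injective⟩ (.refl ℕ))) := by
      simp [Finset.disjoint_left]
    rw [YoungDiagram.cellsOfRowLens, card_union_of_disjoint first_row_disjoint, card_map, ih]
    simp

lemma rowLen_injective : Function.Injective YoungDiagram.rowLen := by
  intro μ ν h
  ext ⟨i, j⟩
  simp only [mem_cells, mem_iff_lt_rowLen, h]

lemma exists_isTableau_rowLen {α : Type*} [Fintype α] (μ : YoungDiagram)
    (hμ : Fintype.card α = μ.card) : ∃ t : α → ℕ × ℕ, IsTableau μ.rowLen t := by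
  let e : α ≃ μ.cells := Fintype.equivOfCardEq (by simpa using hμ)
  refine ⟨fun a ↦ e a, fun a _ ↦ ?_, fun a _ b _ hab ↦ ?_, fun c hc ↦ ?_⟩
  · exact mem_iff_lt_rowLen.1 (e a).2
  · exact e.injective (Subtype.ext hab)
  · exact ⟨e.symm ⟨c, mem_iff_lt_rowLen.2 hc⟩, trivial, by simp⟩

/-- The Young diagram whose row lengths are the parts of a partition. -/
def partitionDiagram {n : ℕ} (p : n.Partition) : YoungDiagram :=
  ofRowLens (p.parts.sort (· ≥ ·)) (p.parts.pairwise_sort (· ≥ ·)).sortedGE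

lemma partitionDiagram_injective {n : ℕ} :
    Function.Injective (partitionDiagram : n.Partition → YoungDiagram) := by
  have rowLens_eq (p : n.Partition) : (partitionDiagram p).rowLens = p.parts.sort (· ≥ ·) :=
    rowLens_ofRowLens_eq_self fun x hx ↦ p.parts_pos ((Multiset.mem_sort _).1 hx)
  intro p q h
  have sort_eq : p.parts.sort (· ≥ ·) = q.parts.sort (· ≥ ·) := by
    rw [← rowLens_eq, ← rowLens_eq, h]
  exact Nat.Partition.ext (by rw [← p.parts.sort_eq (· ≥ ·), sort_eq, Multiset.sort_eq])

lemma card_partitionDiagram {n : ℕ} (p : n.Partition) : (partitionDiagram p).card = n := by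
  rw [partitionDiagram, card_ofRowLens, ← Multiset.sum_coe, Multiset.sort_eq, p.parts_sum]

variable {α : Type*} [Fintype α] [DecidableEq α]

/-- A central element of the group algebra belonging to the shape of the tableau `t`: a nonzero
multiple of the central idempotent of the corresponding irreducible representation. -/
def centralElement (𝕜 : Type*) [CommRing 𝕜] (t : α → ℕ × ℕ) : MonoidAlgebra 𝕜 (Equiv.Perm α) :=
  conjSum (youngSymmetrizer 𝕜 t * HopfAlgebra.antipode 𝕜 (youngSymmetrizer 𝕜 t))

lemma antipode_centralElement {𝕜 : Type*} [CommRing 𝕜] (t : α → ℕ × ℕ) :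
    HopfAlgebra.antipode 𝕜 (centralElement 𝕜 t) = centralElement 𝕜 t := by
  rw [centralElement, antipode_conjSum, HopfAlgebra.antipode_mul_antidistrib, antipode_antipode]

lemma centralElement_mul_youngSymmetrizer_eq_zero {𝕜 : Type*} [Field 𝕜] [CharZero 𝕜]
    {lam mu : ℕ → ℕ} (hlam : Antitone lam) (hmu : Antitone mu) (hne : lam ≠ mu)
    {t s : α → ℕ × ℕ} (ht : IsTableau lam t) (hs : IsTableau mu s) :
    centralElement 𝕜 t * youngSymmetrizer 𝕜 s = 0 :=
  conjSum_mul_eq_zero (youngSymmetrizer_mul_mul_youngSymmetrizer_eq_zero hlam hmu hne ht hs) _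

-- Distinct conjugacy classes have distinct cycle types, hence distinct shapes, so the central
-- elements are orthogonal and there are as many of them as the dimension of the centre.
lemma one_mem_span_centralElement {𝕜 : Type*} [Field 𝕜] [LinearOrder 𝕜] [IsStrictOrderedRing 𝕜] :
    (1 : MonoidAlgebra 𝕜 (Equiv.Perm α)) ∈ Submodule.span 𝕜
      {z | ∃ (lam : ℕ → ℕ) (t : α → ℕ × ℕ), Antitone lam ∧ IsTableau lam t ∧
        z = centralElement 𝕜 t} := by
  let diagram (C : ConjClasses (Equiv.Perm α)) : YoungDiagram := partitionDiagram C.out.partition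
  have diagram_injective : Function.Injective diagram := fun C D hCD ↦ by
    have out_conj : ConjClasses.mk C.out = ConjClasses.mk D.out := ConjClasses.mk_eq_mk_iff_isConj.2
      (Equiv.Perm.partition_eq_of_isConj.2 (partitionDiagram_injective hCD))
    exact (Quotient.out_eq C).symm.trans (out_conj.trans (Quotient.out_eq D))
  have antitone (C) : Antitone (diagram C).rowLen := fun i j hij ↦ (diagram C).rowLen_anti i j hij
  choose t ht using fun C ↦ exists_isTableau_rowLen (diagram C) (card_partitionDiagram _).symm
  have independent : LinearIndependent 𝕜 fun C ↦ centralElement 𝕜 (t C) := by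
    refine linearIndependent_of_mul_eq_zero
      (fun C ↦ conjSum_mul_self_ne_zero (youngSymmetrizer_ne_zero (ht C).injective))
      fun C D hCD ↦ conjSum_mul_conjSum_eq_zero (fun x ↦ ?_) _ _
    exact youngSymmetrizer_mul_mul_youngSymmetrizer_eq_zero (antitone C) (antitone D)
      (fun h ↦ hCD (diagram_injective (rowLen_injective h))) (ht C) (ht D) x
  refine Submodule.span_mono ?_
    (one_mem_span_of_linearIndependent_center independent fun C ↦ conjSum_mem_center _)
  rintro _ ⟨C, rfl⟩
  exact ⟨_, t C, antitone C, ht C, rfl⟩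

end Completeness

section TensorRepresentation

open MonoidAlgebra

variable {d k : ℕ}

lemma permMat_eq_permMatrix (d k : ℕ) (π : Equiv.Perm (Fin k)) :
    permMat d k π = Equiv.Perm.permMatrix ℂ (Equiv.arrowCongr π⁻¹ (Equiv.refl (Fin d))) := by
  ext v w
  simp only [permMat, Matrix.of_apply, Equiv.Perm.permMatrix, PEquiv.toMatrix_apply,
    Equiv.toPEquiv_apply, Option.mem_some_iff]
  exact if_congr (Equiv.eq_comp_symm π⁻¹.symm v w) rfl rfl

lemma permMat_mul_apply (π : Equiv.Perm (Fin k)) (M : Matrix (Fin k → Fin d) (Fin k → Fin d) ℂ)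
    (v w : Fin k → Fin d) : (permMat d k π * M) v w = M (v ∘ ⇑π) w := by
  rw [permMat_eq_permMatrix, Equiv.Perm.permMatrix, PEquiv.toMatrix_toPEquiv_mul]
  rfl

lemma mul_permMat_apply (π : Equiv.Perm (Fin k)) (M : Matrix (Fin k → Fin d) (Fin k → Fin d) ℂ)
    (v w : Fin k → Fin d) : (M * permMat d k π) v w = M v (w ∘ ⇑π⁻¹) := by
  rw [permMat_eq_permMatrix, Equiv.Perm.permMatrix, PEquiv.mul_toMatrix_toPEquiv]
  rfl

lemma permMat_conjTranspose (π : Equiv.Perm (Fin k)) : (permMat d k π)ᴴ = permMat d k π⁻¹ := by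
  rw [permMat_eq_permMatrix, Matrix.conjTranspose_permMatrix, permMat_eq_permMatrix]
  rfl

/-- The action of the group algebra of `S_k` on `(ℂ^d)^{⊗k}`. Real coefficients suffice for the
Young symmetrizers and give access to positivity arguments. -/
def tensorRep (d k : ℕ) :
    MonoidAlgebra ℝ (Equiv.Perm (Fin k)) →ₐ[ℝ] Matrix (Fin k → Fin d) (Fin k → Fin d) ℂ :=
  MonoidAlgebra.lift ℝ _ _
    { toFun := permMat d k
      map_one' := by
        rw [permMat_eq_permMatrix]
        exact Matrix.permMatrix_one
      map_mul' := fun π σ ↦ by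
        simp only [permMat_eq_permMatrix, ← Matrix.permMatrix_mul]
        rfl }

lemma tensorRep_of (π : Equiv.Perm (Fin k)) : tensorRep d k (of ℝ _ π) = permMat d k π :=
  MonoidAlgebra.lift_of _ _

lemma tensorRep_youngSymmetrizer (t : Fin k → ℕ × ℕ) :
    tensorRep d k (youngSymmetrizer ℝ t) = youngSymMat d k t := by
  simp only [youngSymmetrizer, colSum, rowSum, twistedSum, map_mul, map_sum, map_smul, tensorRep_of,
    youngSymMat, signChar_apply, MonoidHom.one_apply, one_smul, mem_fiberPerms]
  congr 2

lemma tensorRep_antipode (x : MonoidAlgebra ℝ (Equiv.Perm (Fin k))) :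
    tensorRep d k (HopfAlgebra.antipode ℝ x) = (tensorRep d k x)ᴴ := by
  induction x using MonoidAlgebra.induction_on with
  | of π =>
    have antipode_of : HopfAlgebra.antipode ℝ (of ℝ _ π) = of ℝ _ π⁻¹ := by
      simp [MonoidAlgebra.of_apply, antipode_single]
    rw [antipode_of, tensorRep_of, tensorRep_of, permMat_conjTranspose]
  | add x y hx hy => rw [map_add, map_add, map_add, hx, hy, Matrix.conjTranspose_add]
  | smul c x hx => rw [map_smul, map_smul, map_smul, hx, Matrix.conjTranspose_smul, star_trivial]

lemma tensorRep_swapSum_apply_self (w : Fin k → Fin d) :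
    tensorRep d k (swapSum ℝ (Fin k)) w w = #{p : Fin k × Fin k | w p.1 = w p.2} := by
  have fixed_iff (p : Fin k × Fin k) : w = w ∘ ⇑(Equiv.swap p.1 p.2)⁻¹ ↔ w p.1 = w p.2 := by
    refine ⟨fun h ↦ by simpa using congrFun h p.1, fun h ↦ funext fun j ↦ ?_⟩
    exact (swap_mem_fiberPerms w h j).symm
  simp only [swapSum, map_sum, tensorRep_of, Matrix.sum_apply, permMat, Matrix.of_apply, fixed_iff,
    sum_boole]

lemma tensorRep_colSum_eq_zero_of_eq {t : Fin k → ℕ × ℕ} {w : Fin k → Fin d} {a b : Fin k}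
    (hab : a ≠ b) (hcol : (t a).2 = (t b).2) (hw : w a = w b) (u : Fin k → Fin d) :
    tensorRep d k (colSum ℝ t) w u = 0 := by
  have swap_comp : w ∘ ⇑(Equiv.swap a b) = w := funext (swap_mem_fiberPerms w hw)
  have h := congrArg (fun x ↦ tensorRep d k x w u)
    (swap_mul_colSum (𝕜 := ℝ) hab hcol)
  simp only [map_mul, tensorRep_of, permMat_mul_apply, swap_comp, map_neg, Matrix.neg_apply] at h
  exact self_eq_neg.1 h

lemma card_letters_lt_le {lam : ℕ → ℕ} (hlam : Antitone lam) {t : Fin k → ℕ × ℕ}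
    (ht : IsTableau lam t) {w u : Fin k → Fin d} (h : tensorRep d k (colSum ℝ t) w u ≠ 0) (i : ℕ) :
    #{j | (w j : ℕ) < i} ≤ ∑ j ∈ range i, lam j :=
  ht.card_filter_lt_le hlam (fun _ _ hab hcol hw ↦
    h (tensorRep_colSum_eq_zero_of_eq hab hcol (Fin.ext hw) u)) i

lemma tensorRep_colSum_eq_zero {lam : ℕ → ℕ} (hlam : Antitone lam) {t : Fin k → ℕ × ℕ}
    (ht : IsTableau lam t) (hd : lam d ≠ 0) : tensorRep d k (colSum ℝ t) = 0 := by
  ext w u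
  by_contra h
  have letters_lt := card_letters_lt_le hlam ht h d
  have rows_lt := (card_filter_le univ fun a ↦ (t a).1 < d + 1).trans_eq' (ht.card_rows_lt (d + 1))
  rw [filter_true_of_mem fun j _ ↦ (w j).is_lt] at letters_lt
  rw [sum_range_succ] at rows_lt
  lia

lemma tensorRep_centralElement_eq_zero {lam : ℕ → ℕ} (hlam : Antitone lam) {t : Fin k → ℕ × ℕ}
    (ht : IsTableau lam t) (hd : lam d ≠ 0) : tensorRep d k (centralElement ℝ t) = 0 := by
  simp [centralElement, conjSum, youngSymmetrizer, tensorRep_colSum_eq_zero hlam ht hd]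

end TensorRepresentation

section IsotypicProjection

open MonoidAlgebra

variable {d k : ℕ}

/-- The row lengths `lam` of a diagram with at most `d` rows, extended by zero. -/
def shape (lam : Fin d → Fin (k + 1)) (i : ℕ) : ℕ :=
  if h : i < d then (lam ⟨i, h⟩ : ℕ) else 0

/-- The partitions of `k` into at most `d` parts: the shapes occurring in `(ℂ^d)^{⊗k}`. -/
def shapes (d k : ℕ) : Finset (Fin d → Fin (k + 1)) :=
  {lam | Antitone (fun i ↦ (lam i : ℕ)) ∧ ∑ i, (lam i : ℕ) = k}

variable {lam mu : Fin d → Fin (k + 1)} {t : Fin k → ℕ × ℕ}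

lemma shape_apply (lam : Fin d → Fin (k + 1)) (i : Fin d) : shape lam i = lam i := dif_pos i.2

lemma shape_eq_zero (lam : Fin d → Fin (k + 1)) (i : ℕ) (hi : d ≤ i) : shape lam i = 0 :=
  dif_neg hi.not_gt

lemma shape_injective : Function.Injective (shape : (Fin d → Fin (k + 1)) → ℕ → ℕ) :=
  fun lam mu h ↦ funext fun i ↦ Fin.ext (by rw [← shape_apply, ← shape_apply, h])

lemma antitone_shape (h : lam ∈ shapes d k) : Antitone (shape lam) := by
  intro i j hij
  rcases lt_or_ge j d with hj | hj
  · have hi := hij.trans_lt hj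
    exact (shape_apply lam ⟨j, hj⟩).trans_le
      (((mem_filter.1 h).2.1 (Fin.mk_le_mk.2 hij)).trans_eq (shape_apply lam ⟨i, hi⟩).symm)
  · exact (shape_eq_zero lam j hj).trans_le (Nat.zero_le _)

lemma coe_youngCells_shape (lam : Fin d → Fin (k + 1)) :
    (youngCells d k (shape lam) : Set (ℕ × ℕ)) = {c | c.2 < shape lam c.1} := by
  ext ⟨i, j⟩
  simp only [youngCells, coe_filter, mem_product, mem_range, Set.mem_ofPred_eq,
    and_iff_right_iff_imp]
  intro h
  have hi : i < d := by
    by_contra! hi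
    simp [shape_eq_zero lam i hi] at h
  exact ⟨hi, h.trans_le ((shape_apply lam ⟨i, hi⟩).trans_le (Nat.lt_succ_iff.1 (lam ⟨i, hi⟩).2))⟩

lemma exists_mem_shapes_shape_eq {nu : ℕ → ℕ} (hnu : Antitone nu) (ht : IsTableau nu t)
    (hd : nu d = 0) : ∃ lam ∈ shapes d k, shape lam = nu := by
  have nu_eq_zero (i : ℕ) (hi : d ≤ i) : nu i = 0 := Nat.le_zero.1 ((hnu hi).trans_eq hd)
  have nu_lt (i : ℕ) : nu i < k + 1 := by
    have := card_filter_le univ fun a ↦ (t a).1 = i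
    rw [ht.card_row, Finset.card_univ, Fintype.card_fin] at this
    lia
  refine ⟨fun i ↦ ⟨nu i, nu_lt i⟩, mem_filter.2 ⟨mem_univ _, fun i j hij ↦ hnu hij, ?_⟩, ?_⟩
  · rw [Fin.sum_univ_eq_sum_range nu d, ← ht.card_rows_lt d,
      filter_true_of_mem fun a _ ↦ ht.fst_lt nu_eq_zero a, Finset.card_univ, Fintype.card_fin]
  · funext i
    rw [shape]
    split_ifs with hi
    · rfl
    · exact (nu_eq_zero i (not_lt.1 hi)).symm

/-- `P` is the orthogonal projection onto the isotypic component of shape `lam`. -/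
structure IsIsotypicProjection (lam : Fin d → Fin (k + 1))
    (P : Matrix (Fin k → Fin d) (Fin k → Fin d) ℂ) : Prop where
  mul_self : P * P = P
  isHermitian : P.IsHermitian
  range_eq : LinearMap.range P.mulVecLin = isotypic d k (shape lam)

namespace IsIsotypicProjection

variable {P M N : Matrix (Fin k → Fin d) (Fin k → Fin d) ℂ}

lemma mul_tensorRep_youngSymmetrizer (hP : IsIsotypicProjection lam P)
    (ht : IsTableau (shape lam) t) :
    P * tensorRep d k (youngSymmetrizer ℝ t) = tensorRep d k (youngSymmetrizer ℝ t) := by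
  refine Matrix.mulVec_injective (funext fun v ↦ ?_)
  have mem_range : tensorRep d k (youngSymmetrizer ℝ t) *ᵥ v ∈ LinearMap.range P.mulVecLin := by
    rw [hP.range_eq]
    refine Submodule.subset_span ⟨t, by rwa [coe_youngCells_shape], 1, v, ?_⟩
    rw [tensorRep_youngSymmetrizer, ← tensorRep_of, map_one, map_one, Matrix.one_mulVec]
  obtain ⟨u, hu⟩ := mem_range
  rw [Matrix.mulVecLin_apply] at hu
  rw [← Matrix.mulVec_mulVec, ← hu, Matrix.mulVec_mulVec, hP.mul_self]

-- The Young symmetrizers of all tableaux of a shape already span its isotypic component, since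
-- translating a Young symmetrizer amounts to relabelling its tableau.
lemma mul_eq_mul (hP : IsIsotypicProjection lam P)
    (h : ∀ t, IsTableau (shape lam) t → M * tensorRep d k (youngSymmetrizer ℝ t) =
      N * tensorRep d k (youngSymmetrizer ℝ t)) : M * P = N * P := by
  have isotypic_le : isotypic d k (shape lam) ≤ LinearMap.eqLocus M.mulVecLin N.mulVecLin := by
    refine Submodule.span_le.2 ?_
    rintro _ ⟨t, ht, g, v, rfl⟩
    rw [coe_youngCells_shape] at ht
    have translate : permMat d k g * youngSymMat d k t =
        tensorRep d k (youngSymmetrizer ℝ (t ∘ ⇑g⁻¹)) * permMat d k g := by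
      rw [← tensorRep_youngSymmetrizer, ← tensorRep_of, ← map_mul, of_mul_youngSymmetrizer, map_mul]
    rw [SetLike.mem_coe, LinearMap.mem_eqLocus, Matrix.mulVecLin_apply, Matrix.mulVecLin_apply,
      Matrix.mulVec_mulVec v, translate, Matrix.mulVec_mulVec, Matrix.mulVec_mulVec,
      ← Matrix.mul_assoc, ← Matrix.mul_assoc, h _ (IsTableau.comp_perm ht g⁻¹)]
  refine Matrix.mulVec_injective (funext fun v ↦ ?_)
  have : P *ᵥ v ∈ isotypic d k (shape lam) := hP.range_eq ▸ LinearMap.mem_range_self P.mulVecLin v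
  simpa only [LinearMap.mem_eqLocus, Matrix.mulVecLin_apply, Matrix.mulVec_mulVec]
    using isotypic_le this

lemma commute (hP : IsIsotypicProjection lam P) (hM : ∀ x, Commute M (tensorRep d k x)) :
    Commute P M := by
  have invariant (N : Matrix (Fin k → Fin d) (Fin k → Fin d) ℂ)
      (hN : ∀ x, Commute N (tensorRep d k x)) : P * N * P = N * P :=
    hP.mul_eq_mul fun t ht ↦ by
      rw [Matrix.mul_assoc, (hN _).eq, ← Matrix.mul_assoc, hP.mul_tensorRep_youngSymmetrizer ht]
  have hMH (x) : Commute Mᴴ (tensorRep d k x) := by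
    have := congrArg conjTranspose (hM (HopfAlgebra.antipode ℝ x)).eq
    simpa [tensorRep_antipode, Matrix.conjTranspose_mul, commute_iff_eq] using this.symm
  have hPMP := congrArg conjTranspose (invariant Mᴴ hMH)
  rw [Matrix.conjTranspose_mul, Matrix.conjTranspose_mul, Matrix.conjTranspose_mul,
    Matrix.conjTranspose_conjTranspose, hP.isHermitian.eq, ← Matrix.mul_assoc] at hPMP
  exact hPMP.symm.trans (invariant M hM)

lemma apply_self_nonneg (hP : IsIsotypicProjection lam P) (w : Fin k → Fin d) :
    0 ≤ (P w w).re := by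
  have : P.PosSemidef := by
    rw [← hP.mul_self]
    nth_rw 2 [← hP.isHermitian.eq]
    exact Matrix.posSemidef_self_mul_conjTranspose P
  exact (Complex.nonneg_iff.1 this.diag_nonneg).1

lemma mul_tensorRep_centralElement (hP : IsIsotypicProjection lam P)
    (ht : IsTableau (shape lam) t) :
    P * tensorRep d k (centralElement ℝ t) = tensorRep d k (centralElement ℝ t) := by
  rw [centralElement, conjSum, map_sum, Matrix.mul_sum]
  refine sum_congr rfl fun g _ ↦ ?_
  rw [← mul_assoc (of ℝ _ g), of_mul_youngSymmetrizer, mul_assoc, mul_assoc, map_mul,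
    ← Matrix.mul_assoc, hP.mul_tensorRep_youngSymmetrizer (ht.comp_perm g⁻¹)]

lemma mul_tensorRep_centralElement_eq_zero (hP : IsIsotypicProjection lam P)
    (hlam : lam ∈ shapes d k) (hmu : mu ∈ shapes d k) (hne : mu ≠ lam)
    (ht : IsTableau (shape mu) t) : P * tensorRep d k (centralElement ℝ t) = 0 := by
  have adjoint_eq_zero : tensorRep d k (centralElement ℝ t) * P = 0 * P :=
    hP.mul_eq_mul fun s hs ↦ by
      rw [← map_mul, centralElement_mul_youngSymmetrizer_eq_zero (antitone_shape hmu)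
        (antitone_shape hlam) (shape_injective.ne hne) ht hs, map_zero, zero_mul]
  rw [← antipode_centralElement, tensorRep_antipode, ← Matrix.conjTranspose_eq_zero,
    Matrix.conjTranspose_mul, Matrix.conjTranspose_conjTranspose, hP.isHermitian.eq,
    adjoint_eq_zero, Matrix.zero_mul]

lemma card_letters_lt_le (hP : IsIsotypicProjection lam P) (hlam : lam ∈ shapes d k)
    {w u : Fin k → Fin d} (h : P w u ≠ 0) (i : ℕ) :
    #{j | (w j : ℕ) < i} ≤ ∑ j ∈ range i, shape lam j := by
  by_contra hi
  have row_eq_zero : Matrix.single w w 1 * P = 0 * P := hP.mul_eq_mul fun t ht ↦ by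
    have colSum_row : Matrix.single w w 1 * tensorRep d k (colSum ℝ t) = 0 := by
      ext v u
      rcases eq_or_ne v w with rfl | hv
      · rw [Matrix.single_mul_apply_same, one_mul]
        by_contra hne
        exact hi (SchurWeyl.card_letters_lt_le (antitone_shape hlam) ht hne i)
      · exact Matrix.single_mul_apply_of_ne _ _ _ _ _ hv _
    rw [youngSymmetrizer, map_mul, ← Matrix.mul_assoc, colSum_row, Matrix.zero_mul, Matrix.zero_mul]
  exact h (by simpa using congrFun₂ row_eq_zero w u)

lemma exists_tensorRep_swapSum_mul_eq_smul (hP : IsIsotypicProjection lam P)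
    (hlam : lam ∈ shapes d k) :
    ∃ c : ℝ, ∑ i, (lam i : ℝ) ^ 2 - k * d ≤ c ∧ tensorRep d k (swapSum ℝ (Fin k)) * P = c • P := by
  by_cases h : ∃ t : Fin k → ℕ × ℕ, IsTableau (shape lam) t
  · obtain ⟨t, ht⟩ := h
    refine ⟨content t, ?_, ?_⟩
    · have := ht.sum_sq_sub_le_content (shape_eq_zero lam)
      rw [← Fin.sum_univ_eq_sum_range (fun i ↦ (shape lam i : ℤ) ^ 2) d, Fintype.card_fin] at this
      simp only [shape_apply] at this
      exact_mod_cast this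
    · rw [← Matrix.one_mul P, ← smul_mul_assoc, Matrix.one_mul]
      refine hP.mul_eq_mul fun s hs ↦ ?_
      obtain ⟨g, rfl⟩ := ht.exists_perm hs
      rw [← map_mul, swapSum_mul_youngSymmetrizer (antitone_shape hlam) hs, content_comp_perm,
        ← Int.cast_smul_eq_zsmul ℝ, map_smul, smul_mul_assoc, Matrix.one_mul]
  · have P_eq_zero : P = 0 := by
      simpa using hP.mul_eq_mul (M := 1) (N := 0) fun t ht ↦ absurd ⟨t, ht⟩ h
    exact ⟨_, le_rfl, by simp [P_eq_zero]⟩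

end IsIsotypicProjection

lemma sum_isotypicProjection_eq_one
    {P : (Fin d → Fin (k + 1)) → Matrix (Fin k → Fin d) (Fin k → Fin d) ℂ}
    (hP : ∀ lam ∈ shapes d k, IsIsotypicProjection lam (P lam)) :
    ∑ lam ∈ shapes d k, P lam = 1 := by
  suffices fixes : ∀ x ∈ Submodule.span ℝ {z | ∃ (nu : ℕ → ℕ) (t : Fin k → ℕ × ℕ), Antitone nu ∧
      IsTableau nu t ∧ z = centralElement ℝ t},
      (∑ lam ∈ shapes d k, P lam) * tensorRep d k x = tensorRep d k x by
    simpa using fixes 1 one_mem_span_centralElement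
  intro x hx
  induction hx using Submodule.span_induction with
  | mem z hz =>
    obtain ⟨nu, t, hnu, ht, rfl⟩ := hz
    by_cases hd : nu d = 0
    · obtain ⟨mu, hmu, rfl⟩ := exists_mem_shapes_shape_eq hnu ht hd
      rw [Finset.sum_mul, sum_eq_single_of_mem mu hmu fun lam hlam hne ↦
        (hP lam hlam).mul_tensorRep_centralElement_eq_zero hlam hmu hne.symm ht]
      exact (hP mu hmu).mul_tensorRep_centralElement ht
    · rw [tensorRep_centralElement_eq_zero hnu ht hd, mul_zero]
  | zero => rw [map_zero, mul_zero]
  | add y z _ _ hy hz => rw [map_add, mul_add, hy, hz]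
  | smul c y _ hy => rw [map_smul, mul_smul_comm, hy]

end IsotypicProjection

section Diagonalization

lemma exists_mem_unitaryGroup_eq_mul_diagonal_mul_star {𝕜 n : Type*} [RCLike 𝕜] [Fintype n]
    [DecidableEq n] {A : Matrix n n 𝕜} (hA : A.IsHermitian) (σ : Equiv.Perm n) :
    ∃ W ∈ Matrix.unitaryGroup n 𝕜,
      A = W * Matrix.diagonal (fun i ↦ (hA.eigenvalues (σ i) : 𝕜)) * star W := by
  have spectral := hA.spectral_theorem
  rw [Unitary.conjStarAlgAut_apply] at spectral
  set U : Matrix n n 𝕜 := (hA.eigenvectorUnitary : Matrix n n 𝕜)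
  have star_mul_self : star U * U = 1 := Unitary.coe_star_mul_self hA.eigenvectorUnitary
  have star_submatrix : star (U.submatrix id σ) = (star U).submatrix σ id := rfl
  refine ⟨U.submatrix id σ, Matrix.mem_unitaryGroup_iff'.2 ?_, ?_⟩
  · rw [star_submatrix, ← Matrix.submatrix_mul _ _ _ _ _ Function.bijective_id, star_mul_self,
      Matrix.submatrix_one_equiv]
  · have diagonal_comp : Matrix.diagonal (fun i ↦ (hA.eigenvalues (σ i) : 𝕜)) =
        (Matrix.diagonal (RCLike.ofReal ∘ hA.eigenvalues)).submatrix σ σ := by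
      rw [Matrix.submatrix_diagonal_equiv]
      rfl
    rw [star_submatrix, diagonal_comp, Matrix.submatrix_mul_equiv, Matrix.submatrix_mul_equiv]
    exact spectral

lemma trace_mul_conj_of_commute {R n : Type*} [CommSemiring R] [Fintype n] [DecidableEq n]
    {P M N : Matrix n n R} (hPM : Commute P M) (hNM : N * M = 1) (D : Matrix n n R) :
    (P * (M * D * N)).trace = (P * D).trace := by
  rw [← Matrix.mul_assoc, ← Matrix.mul_assoc, hPM.eq, Matrix.trace_mul_comm, ← Matrix.mul_assoc,
    ← Matrix.mul_assoc, hNM, Matrix.one_mul]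

variable {d k : ℕ}

lemma tensorPow_mul (A B : Matrix (Fin d) (Fin d) ℂ) :
    tensorPow d k (A * B) = tensorPow d k A * tensorPow d k B := by
  ext v w
  simp only [tensorPow, Matrix.mul_apply, Matrix.of_apply, Fintype.prod_sum, prod_mul_distrib]

lemma tensorPow_diagonal (f : Fin d → ℂ) :
    tensorPow d k (Matrix.diagonal f) = Matrix.diagonal fun w ↦ ∏ j, f (w j) := by
  ext v w
  rw [tensorPow, Matrix.of_apply]
  rcases eq_or_ne v w with rfl | h
  · simp
  · obtain ⟨j, hj⟩ := Function.ne_iff.1 h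
    rw [Matrix.diagonal_apply_ne _ h]
    exact prod_eq_zero (mem_univ j) (Matrix.diagonal_apply_ne _ hj)

lemma tensorPow_one : tensorPow d k 1 = 1 := by
  rw [← Matrix.diagonal_one, tensorPow_diagonal]
  simp

lemma commute_tensorPow_tensorRep (A : Matrix (Fin d) (Fin d) ℂ)
    (x : MonoidAlgebra ℝ (Equiv.Perm (Fin k))) : Commute (tensorPow d k A) (tensorRep d k x) := by
  induction x using MonoidAlgebra.induction_on with
  | of π =>
    rw [tensorRep_of]
    ext v w
    rw [permMat_mul_apply, mul_permMat_apply]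
    simp only [tensorPow, Matrix.of_apply, Function.comp]
    exact (Fintype.prod_equiv π _ _ fun j ↦ by simp).symm
  | add x y hx hy => rw [map_add]; exact hx.add_right hy
  | smul c x hx => rw [map_smul]; exact hx.smul_right c

/-- The diagonal entry of `P` averaged over words of independent letters with law `r`, that is,
`tr (P ρ^{⊗k})` for `P` an isotypic projection and `ρ` with spectrum `r`. -/
def outcomeProb (r : Fin d → ℝ) (P : Matrix (Fin k → Fin d) (Fin k → Fin d) ℂ) : ℝ :=
  ∑ w : Fin k → Fin d, (∏ j, r (w j)) * (P w w).re

lemma IsIsotypicProjection.re_trace_mul_tensorPow {lam : Fin d → Fin (k + 1)}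
    {P : Matrix (Fin k → Fin d) (Fin k → Fin d) ℂ} (hP : IsIsotypicProjection lam P)
    {ρ W : Matrix (Fin d) (Fin d) ℂ} {r : Fin d → ℝ} (hW : W ∈ Matrix.unitaryGroup (Fin d) ℂ)
    (hρ : ρ = W * Matrix.diagonal (fun i ↦ (r i : ℂ)) * star W) :
    (P * tensorPow d k ρ).trace.re = outcomeProb r P := by
  have star_mul_self : tensorPow d k (star W) * tensorPow d k W = 1 := by
    rw [← tensorPow_mul, Matrix.mem_unitaryGroup_iff'.1 hW, tensorPow_one]
  rw [hρ, tensorPow_mul, tensorPow_mul,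
    trace_mul_conj_of_commute (hP.commute (commute_tensorPow_tensorRep W)) star_mul_self,
    tensorPow_diagonal, Matrix.trace, Complex.re_sum, outcomeProb]
  refine sum_congr rfl fun w _ ↦ ?_
  rw [Matrix.diag_apply, Matrix.mul_diagonal, ← Complex.ofReal_prod, Complex.re_mul_ofReal,
    mul_comm]

end Diagonalization

section IndependentLetters

variable {κ ι : Type*} [Fintype κ] [DecidableEq κ] [Fintype ι]

lemma sum_prod_mul_prod {R : Type*} [CommSemiring R] {r : ι → R} (hr : ∑ x, r x = 1)
    (s : Finset κ) (f : κ → ι → R) :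
    ∑ w : κ → ι, (∏ j, r (w j)) * ∏ j ∈ s, f j (w j) = ∏ j ∈ s, ∑ x, r x * f j x := by
  have sum_eq (j : κ) : ∑ x, r x * (if j ∈ s then f j x else 1) =
      if j ∈ s then ∑ x, r x * f j x else 1 := by
    split_ifs
    · rfl
    · simp only [mul_one, hr]
  calc ∑ w : κ → ι, (∏ j, r (w j)) * ∏ j ∈ s, f j (w j)
      = ∑ w : κ → ι, ∏ j, r (w j) * (if j ∈ s then f j (w j) else 1) := by
        simp only [prod_mul_distrib, prod_ite_mem, univ_inter]
    _ = ∏ j, ∑ x, r x * (if j ∈ s then f j x else 1) := by rw [Fintype.prod_sum]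
    _ = ∏ j ∈ s, ∑ x, r x * f j x := by simp only [sum_eq, prod_ite_mem, univ_inter]

lemma sum_prod_eq_one {R : Type*} [CommSemiring R] {r : ι → R} (hr : ∑ x, r x = 1) :
    ∑ w : κ → ι, ∏ j, r (w j) = 1 := by
  simpa using sum_prod_mul_prod hr (∅ : Finset κ) fun _ _ ↦ 1

lemma sum_prod_mul_card_filter {R : Type*} [CommSemiring R] {r : ι → R} (hr : ∑ x, r x = 1)
    (p : ι → Prop) [DecidablePred p] :
    ∑ w : κ → ι, (∏ j, r (w j)) * #{j | p (w j)} = Fintype.card κ * ∑ x with p x, r x := by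
  have letter (j : κ) : ∑ w : κ → ι, (∏ j, r (w j)) * (if p (w j) then 1 else 0) =
      ∑ x with p x, r x := by
    simpa [sum_filter] using sum_prod_mul_prod hr {j} fun _ x ↦ if p x then 1 else 0
  simp only [card_filter, Nat.cast_sum, Nat.cast_ite, Nat.cast_one, Nat.cast_zero, mul_sum]
  rw [sum_comm]
  simp only [letter, sum_const, Finset.card_univ, nsmul_eq_mul, mul_sum]

variable [DecidableEq ι]

lemma sum_prod_mul_ite_eq {R : Type*} [CommSemiring R] {r : ι → R} (hr : ∑ x, r x = 1) {a b : κ}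
    (hab : a ≠ b) :
    ∑ w : κ → ι, (∏ j, r (w j)) * (if w a = w b then 1 else 0) = ∑ x, r x ^ 2 := by
  have ite_eq (w : κ → ι) : (if w a = w b then 1 else 0 : R) =
      ∑ x, ∏ j ∈ {a, b}, if w j = x then 1 else 0 := by
    simp [prod_pair hab, eq_comm]
  simp only [ite_eq, mul_sum]
  rw [sum_comm]
  refine sum_congr rfl fun x _ ↦ ?_
  rw [sum_prod_mul_prod hr {a, b} fun _ y ↦ if y = x then 1 else 0]
  simp [prod_pair hab, sq]

lemma sum_prod_mul_card_equal_pairs_le {R : Type*} [CommRing R] [LinearOrder R]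
    [IsStrictOrderedRing R] {r : ι → R} (hr : ∑ x, r x = 1) :
    ∑ w : κ → ι, (∏ j, r (w j)) * #{p : κ × κ | w p.1 = w p.2} ≤
      Fintype.card κ + (Fintype.card κ : R) ^ 2 * ∑ x, r x ^ 2 := by
  have pair (p : κ × κ) : ∑ w : κ → ι, (∏ j, r (w j)) * (if w p.1 = w p.2 then 1 else 0) ≤
      (if p.1 = p.2 then 1 else 0) + ∑ x, r x ^ 2 := by
    by_cases h : p.1 = p.2
    · simpa [h, sum_prod_eq_one hr] using sum_nonneg fun x _ ↦ sq_nonneg (r x)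
    · rw [sum_prod_mul_ite_eq hr h, if_neg h, zero_add]
  simp only [card_filter, Nat.cast_sum, Nat.cast_ite, Nat.cast_one, Nat.cast_zero, mul_sum]
  rw [sum_comm]
  refine (sum_le_sum fun p _ ↦ pair p).trans_eq ?_
  rw [sum_add_distrib, Fintype.sum_prod_type]
  simp [← mul_sum, sq]

end IndependentLetters

section MomentInequalities

variable {α β R : Type*}

lemma mul_sum_le_sum_mul_of_antitone [LinearOrder α] [CommRing R] [LinearOrder R]
    [IsStrictOrderedRing R] {r a : α → R} (hr : Antitone r) (s : Finset α)
    (ha : ∀ y ∈ s, 0 ≤ ∑ x ∈ s with x ≤ y, a x) {c : R} (hc : ∀ y ∈ s, c ≤ r y) :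
    c * ∑ x ∈ s, a x ≤ ∑ x ∈ s, r x * a x := by
  induction s using Finset.induction_on_max generalizing c with
  | empty => simp
  | insert M s hM ih =>
    have hMs : M ∉ s := fun h ↦ (hM M h).false
    have partial_sums (y) (hy : y ∈ s) : 0 ≤ ∑ x ∈ s with x ≤ y, a x := by
      simpa only [filter_insert, if_neg (hM y hy).not_ge] using ha y (mem_insert_of_mem hy)
    have total : 0 ≤ ∑ x ∈ insert M s, a x := by
      have le_M : ∀ x ∈ insert M s, x ≤ M := by
        simpa using fun x hx ↦ (hM x hx).le
      simpa only [filter_true_of_mem le_M] using ha M (mem_insert_self M s)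
    calc c * ∑ x ∈ insert M s, a x
        ≤ r M * ∑ x ∈ insert M s, a x :=
          mul_le_mul_of_nonneg_right (hc M (mem_insert_self M s)) total
      _ = r M * a M + r M * ∑ x ∈ s, a x := by rw [sum_insert hMs, mul_add]
      _ ≤ r M * a M + ∑ x ∈ s, r x * a x :=
          add_le_add_right (ih partial_sums fun y hy ↦ hr (hM y hy).le) _
      _ = ∑ x ∈ insert M s, r x * a x := by rw [sum_insert hMs]

lemma sum_mul_sum_sq_sub [Fintype α] [CommRing R] {F : Finset β} {Q : β → R}
    (hQ : ∑ l ∈ F, Q l = 1) (L : β → α → R) (m : α → R) :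
    ∑ l ∈ F, Q l * ∑ x, (L l x - m x) ^ 2 =
      ∑ l ∈ F, Q l * ∑ x, L l x ^ 2 - ∑ x, m x ^ 2 -
        2 * ∑ x, m x * (∑ l ∈ F, Q l * L l x - m x) := by
  have expand (l : β) : Q l * ∑ x, (L l x - m x) ^ 2 =
      Q l * ∑ x, L l x ^ 2 - 2 * ∑ x, m x * (Q l * L l x) + Q l * ∑ x, m x ^ 2 := by
    simp only [mul_sum, ← sum_sub_distrib, ← sum_add_distrib]
    exact sum_congr rfl fun x _ ↦ by ring
  have cross : ∑ l ∈ F, ∑ x, m x * (Q l * L l x) = ∑ x, m x * ∑ l ∈ F, Q l * L l x := by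
    rw [sum_comm]
    simp only [mul_sum]
  simp only [expand, sum_add_distrib, sum_sub_distrib, ← mul_sum, ← Finset.sum_mul, hQ, cross,
    mul_sub]
  simp only [← sq]
  ring

lemma sum_mul_sum_sq_sub_le [Fintype α] [LinearOrder α] [CommRing R] [LinearOrder R]
    [IsStrictOrderedRing R] {F : Finset β} {Q : β → R} (hQ : ∑ l ∈ F, Q l = 1) {L : β → α → R}
    {m : α → R} (hm : Antitone m) (hm_nonneg : ∀ x, 0 ≤ m x)
    (h_partial : ∀ y, ∑ x with x ≤ y, m x ≤ ∑ l ∈ F, Q l * ∑ x with x ≤ y, L l x) {C : R}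
    (h_sq : ∑ l ∈ F, Q l * ∑ x, L l x ^ 2 ≤ ∑ x, m x ^ 2 + C) :
    ∑ l ∈ F, Q l * ∑ x, (L l x - m x) ^ 2 ≤ C := by
  have partial_sums (y : α) : 0 ≤ ∑ x with x ≤ y, (∑ l ∈ F, Q l * L l x - m x) := by
    rw [sum_sub_distrib, sum_comm, sub_nonneg]
    simpa only [mul_sum] using h_partial y
  have covariance : 0 ≤ ∑ x, m x * (∑ l ∈ F, Q l * L l x - m x) := by
    simpa using mul_sum_le_sum_mul_of_antitone hm univ (fun y _ ↦ partial_sums y)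
      fun y _ ↦ hm_nonneg y
  rw [sum_mul_sum_sq_sub hQ]
  linarith

lemma one_sub_div_le_sum_filter [Field R] [LinearOrder R] [IsStrictOrderedRing R] {F : Finset β}
    {Q f : β → R} (hQ_nonneg : ∀ l ∈ F, 0 ≤ Q l) (hQ : ∑ l ∈ F, Q l = 1)
    (hf : ∀ l ∈ F, 0 ≤ f l) (p : β → Prop) [DecidablePred p] {c : R} (hc : 0 < c)
    (hp : ∀ l ∈ F, ¬p l → c ≤ f l) {M : R} (hM : ∑ l ∈ F, Q l * f l ≤ M) :
    1 - M / c ≤ ∑ l ∈ F with p l, Q l := by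
  have tail : (∑ l ∈ F with ¬p l, Q l) * c ≤ M := by
    rw [Finset.sum_mul]
    calc ∑ l ∈ F with ¬p l, Q l * c
        ≤ ∑ l ∈ F with ¬p l, Q l * f l := sum_le_sum fun l hl ↦ by
          obtain ⟨hlF, hlp⟩ := mem_filter.1 hl
          exact mul_le_mul_of_nonneg_left (hp l hlF hlp) (hQ_nonneg l hlF)
      _ ≤ ∑ l ∈ F, Q l * f l := sum_le_sum_of_subset_of_nonneg (filter_subset _ _)
          fun l hl _ ↦ mul_nonneg (hQ_nonneg l hl) (hf l hl)
      _ ≤ M := hM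
  have split := sum_filter_add_sum_filter_not F p Q
  linarith [(le_div_iff₀ hc).2 tail]

end MomentInequalities

section SpectralDistribution

variable {d k : ℕ} {r : Fin d → ℝ}
  {P : (Fin d → Fin (k + 1)) → Matrix (Fin k → Fin d) (Fin k → Fin d) ℂ}

lemma IsIsotypicProjection.outcomeProb_nonneg {lam : Fin d → Fin (k + 1)}
    {P : Matrix (Fin k → Fin d) (Fin k → Fin d) ℂ} (hP : IsIsotypicProjection lam P)
    (hr : ∀ i, 0 ≤ r i) : 0 ≤ outcomeProb r P :=
  sum_nonneg fun w _ ↦ mul_nonneg (prod_nonneg fun j _ ↦ hr (w j)) (hP.apply_self_nonneg w)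

lemma sum_outcomeProb_mul (r : Fin d → ℝ)
    (P : (Fin d → Fin (k + 1)) → Matrix (Fin k → Fin d) (Fin k → Fin d) ℂ)
    (f : (Fin d → Fin (k + 1)) → ℝ) :
    ∑ lam ∈ shapes d k, outcomeProb r (P lam) * f lam =
      ∑ w : Fin k → Fin d, (∏ j, r (w j)) * ∑ lam ∈ shapes d k, (P lam w w).re * f lam := by
  simp only [outcomeProb, Finset.sum_mul, mul_sum, mul_assoc]
  exact sum_comm

lemma sum_re_apply_self (hP : ∀ lam ∈ shapes d k, IsIsotypicProjection lam (P lam))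
    (w : Fin k → Fin d) : ∑ lam ∈ shapes d k, (P lam w w).re = 1 := by
  rw [← Complex.re_sum, ← Matrix.sum_apply, sum_isotypicProjection_eq_one hP,
    Matrix.one_apply_eq, Complex.one_re]

lemma sum_outcomeProb_eq_one (hP : ∀ lam ∈ shapes d k, IsIsotypicProjection lam (P lam))
    (hr : ∑ i, r i = 1) : ∑ lam ∈ shapes d k, outcomeProb r (P lam) = 1 := by
  simpa [sum_re_apply_self hP, sum_prod_eq_one hr] using sum_outcomeProb_mul r P 1

lemma sum_range_shape (lam : Fin d → Fin (k + 1)) (y : Fin d) :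
    ∑ j ∈ range (y + 1), shape lam j = ∑ x with x ≤ y, (lam x : ℕ) := by
  have image : range (y + 1) = (univ.filter fun x : Fin d ↦ x ≤ y).map Fin.valEmbedding := by
    rw [filter_ge_eq_Iic, Fin.map_valEmbedding_Iic, Nat.range_succ_eq_Iic]
  simp only [image, sum_map, Fin.valEmbedding_apply, shape_apply]

lemma IsIsotypicProjection.card_letters_le {lam : Fin d → Fin (k + 1)}
    {P : Matrix (Fin k → Fin d) (Fin k → Fin d) ℂ} (hP : IsIsotypicProjection lam P)
    (hlam : lam ∈ shapes d k) {w : Fin k → Fin d} (h : P w w ≠ 0) (y : Fin d) :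
    #{j | w j ≤ y} ≤ ∑ x with x ≤ y, (lam x : ℕ) := by
  rw [← sum_range_shape]
  simpa only [Nat.lt_succ_iff, Fin.val_fin_le] using hP.card_letters_lt_le hlam h (y + 1)

lemma mul_sum_le_sum_outcomeProb_mul_sum
    (hP : ∀ lam ∈ shapes d k, IsIsotypicProjection lam (P lam)) (hr_nonneg : ∀ i, 0 ≤ r i)
    (hr : ∑ i, r i = 1) (y : Fin d) :
    k * ∑ x with x ≤ y, r x ≤
      ∑ lam ∈ shapes d k, outcomeProb r (P lam) * ∑ x with x ≤ y, (lam x : ℝ) := by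
  have letters := sum_prod_mul_card_filter (κ := Fin k) hr (· ≤ y)
  rw [Fintype.card_fin] at letters
  rw [sum_outcomeProb_mul, ← letters]
  refine sum_le_sum fun w _ ↦ mul_le_mul_of_nonneg_left ?_ (prod_nonneg fun j _ ↦ hr_nonneg (w j))
  rw [← one_mul (#{j | w j ≤ y} : ℝ), ← sum_re_apply_self hP w, Finset.sum_mul]
  refine sum_le_sum fun lam hlam ↦ ?_
  rcases eq_or_ne (P lam w w) 0 with h | h
  · simp [h]
  · exact mul_le_mul_of_nonneg_left (mod_cast (hP lam hlam).card_letters_le hlam h y)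
      ((hP lam hlam).apply_self_nonneg w)

lemma sum_re_apply_self_mul_sum_sq_le
    (hP : ∀ lam ∈ shapes d k, IsIsotypicProjection lam (P lam)) (w : Fin k → Fin d) :
    ∑ lam ∈ shapes d k, (P lam w w).re * ∑ i, (lam i : ℝ) ^ 2 ≤
      #{p : Fin k × Fin k | w p.1 = w p.2} + k * d := by
  set S := tensorRep d k (swapSum ℝ (Fin k))
  have S_eq : S = ∑ lam ∈ shapes d k, S * P lam := by
    rw [← mul_sum, sum_isotypicProjection_eq_one hP, mul_one]
  have trace_eq : ∑ lam ∈ shapes d k, ((S * P lam) w w).re =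
      #{p : Fin k × Fin k | w p.1 = w p.2} := by
    rw [← Complex.re_sum, ← Matrix.sum_apply, ← S_eq]
    exact (congrArg Complex.re (tensorRep_swapSum_apply_self w)).trans (Complex.natCast_re _)
  have content_le (lam) (hlam : lam ∈ shapes d k) :
      (P lam w w).re * (∑ i, (lam i : ℝ) ^ 2 - k * d) ≤ ((S * P lam) w w).re := by
    obtain ⟨c, hc, hSP⟩ := (hP lam hlam).exists_tensorRep_swapSum_mul_eq_smul hlam
    rw [hSP, Matrix.smul_apply, Complex.smul_re, smul_eq_mul, mul_comm]
    exact mul_le_mul_of_nonneg_right hc ((hP lam hlam).apply_self_nonneg w)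
  have := sum_le_sum content_le
  simp only [mul_sub, sum_sub_distrib] at this
  rw [← Finset.sum_mul, sum_re_apply_self hP, trace_eq] at this
  linarith

lemma sum_outcomeProb_mul_sum_sq_le
    (hP : ∀ lam ∈ shapes d k, IsIsotypicProjection lam (P lam)) (hr_nonneg : ∀ i, 0 ≤ r i)
    (hr : ∑ i, r i = 1) :
    ∑ lam ∈ shapes d k, outcomeProb r (P lam) * ∑ i, (lam i : ℝ) ^ 2 ≤
      ∑ i, (k * r i) ^ 2 + k * (d + 1) := by
  calc ∑ lam ∈ shapes d k, outcomeProb r (P lam) * ∑ i, (lam i : ℝ) ^ 2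
      ≤ ∑ w : Fin k → Fin d, (∏ j, r (w j)) * (#{p : Fin k × Fin k | w p.1 = w p.2} + k * d) := by
        rw [sum_outcomeProb_mul]
        exact sum_le_sum fun w _ ↦ mul_le_mul_of_nonneg_left (sum_re_apply_self_mul_sum_sq_le hP w)
          (prod_nonneg fun j _ ↦ hr_nonneg (w j))
    _ = ∑ w : Fin k → Fin d, (∏ j, r (w j)) * #{p : Fin k × Fin k | w p.1 = w p.2} + k * d := by
        simp only [mul_add, sum_add_distrib, ← Finset.sum_mul, sum_prod_eq_one hr, one_mul]
    _ ≤ k + k ^ 2 * ∑ i, r i ^ 2 + k * d := by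
        have := sum_prod_mul_card_equal_pairs_le (κ := Fin k) hr
        rw [Fintype.card_fin] at this
        exact add_le_add_left this _
    _ = ∑ i, (k * r i) ^ 2 + k * (d + 1) := by
        simp only [mul_pow, ← mul_sum]
        ring

lemma sum_outcomeProb_mul_sum_sq_sub_le
    (hP : ∀ lam ∈ shapes d k, IsIsotypicProjection lam (P lam)) (hr_anti : Antitone r)
    (hr_nonneg : ∀ i, 0 ≤ r i) (hr : ∑ i, r i = 1) :
    ∑ lam ∈ shapes d k, outcomeProb r (P lam) * ∑ i, ((lam i : ℝ) - k * r i) ^ 2 ≤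
      k * (d + 1) := by
  refine sum_mul_sum_sq_sub_le (sum_outcomeProb_eq_one hP hr)
    (hr_anti.const_mul k.cast_nonneg) (fun i ↦ mul_nonneg k.cast_nonneg (hr_nonneg i))
    (fun y ↦ ?_) (sum_outcomeProb_mul_sum_sq_le hP hr_nonneg hr)
  rw [← mul_sum]
  exact mul_sum_le_sum_outcomeProb_mul_sum hP hr_nonneg hr y

theorem one_sub_div_le_sum_outcomeProb
    (hP : ∀ lam ∈ shapes d k, IsIsotypicProjection lam (P lam)) (hr_anti : Antitone r)
    (hr_nonneg : ∀ i, 0 ≤ r i) (hr : ∑ i, r i = 1) (hk : 0 < k) {ε : ℝ} (hε : 0 < ε) :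
    1 - d * (d + 1) / (k * ε ^ 2) ≤
      ∑ lam ∈ shapes d k with ∑ i, |(lam i : ℝ) / k - r i| < ε, outcomeProb r (P lam) := by
  have hk' : (0 : ℝ) < k := Nat.cast_pos.2 hk
  have far (lam : Fin d → Fin (k + 1)) (h : ¬∑ i, |(lam i : ℝ) / k - r i| < ε) :
      (k * ε) ^ 2 ≤ d * ∑ i, ((lam i : ℝ) - k * r i) ^ 2 := by
    have scale (i : Fin d) : |(lam i : ℝ) - k * r i| = k * |(lam i : ℝ) / k - r i| := by
      rw [← abs_of_pos hk', ← abs_mul, abs_of_pos hk', mul_sub, mul_div_cancel₀ _ hk'.ne']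
    calc (k * ε) ^ 2
        ≤ (∑ i, |(lam i : ℝ) - k * r i|) ^ 2 := by
          simp only [scale, ← mul_sum]
          gcongr
          exact not_lt.1 h
      _ ≤ d * ∑ i, ((lam i : ℝ) - k * r i) ^ 2 := by
          simpa using sq_sum_le_card_mul_sum_sq (s := univ) (f := fun i ↦ |(lam i : ℝ) - k * r i|)
  have markov := one_sub_div_le_sum_filter (M := d * (k * (d + 1)))
    (fun lam hlam ↦ (hP lam hlam).outcomeProb_nonneg hr_nonneg) (sum_outcomeProb_eq_one hP hr)
    (f := fun lam ↦ d * ∑ i, ((lam i : ℝ) - k * r i) ^ 2) (fun lam _ ↦ by positivity)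
    (fun lam ↦ ∑ i, |(lam i : ℝ) / k - r i| < ε) (c := (k * ε) ^ 2) (by positivity)
    (fun lam _ ↦ far lam) (by
      simp only [mul_left_comm _ (d : ℝ), ← mul_sum]
      exact mul_le_mul_of_nonneg_left
        (sum_outcomeProb_mul_sum_sq_sub_le hP hr_anti hr_nonneg hr) d.cast_nonneg)
  have error_eq : (d : ℝ) * (k * (d + 1)) / (k * ε) ^ 2 = d * (d + 1) / (k * ε ^ 2) := by
    field_simp
  rwa [error_eq] at markov

theorem one_sub_div_le_re_trace_mul_tensorPow {ρ : Matrix (Fin d) (Fin d) ℂ}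
    (hρ : ρ.PosSemidef) (hρtr : ρ.trace = 1) (hr_anti : Antitone r) {σ : Equiv.Perm (Fin d)}
    (hr_spec : ∀ i, r i = hρ.1.eigenvalues (σ i))
    (hP : ∀ lam ∈ shapes d k, IsIsotypicProjection lam (P lam)) (hk : 0 < k) {ε : ℝ}
    (hε : 0 < ε) :
    1 - d * (d + 1) / (k * ε ^ 2) ≤
      ((∑ lam ∈ shapes d k with ∑ i, |(lam i : ℝ) / k - r i| < ε, P lam) *
        tensorPow d k ρ).trace.re := by
  have r_nonneg (i : Fin d) : 0 ≤ r i := (hr_spec i).symm ▸ hρ.eigenvalues_nonneg (σ i)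
  have r_sum : ∑ i, r i = 1 := by
    have trace_eq := hρ.1.trace_eq_sum_eigenvalues.symm.trans hρtr
    simp only [hr_spec, Equiv.sum_comp σ hρ.1.eigenvalues]
    rw [← RCLike.ofReal_sum] at trace_eq
    exact Complex.ofReal_eq_one.1 trace_eq
  obtain ⟨W, hW, hρW⟩ := exists_mem_unitaryGroup_eq_mul_diagonal_mul_star hρ.1 σ
  simp only [← hr_spec] at hρW
  rw [Finset.sum_mul, Matrix.trace_sum, Complex.re_sum]
  refine (one_sub_div_le_sum_outcomeProb hP hr_anti r_nonneg r_sum hk hε).trans_eq ?_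
  exact sum_congr rfl fun lam hlam ↦
    ((hP lam (mem_filter.1 hlam).1).re_trace_mul_tensorPow hW hρW).symm

end SpectralDistribution

end SchurWeyl

/-- Typical-subspace estimate: if `ρ` is a density operator on `ℂ^d` with spectrum `r` and
`ε₁ > 0`, and `P_X(k)` is the sum of the Schur–Weyl projectors `P_lam` over partitions
`lam ⊢ k` with `Σ_i |lam_i/k − r_i| < ε₁`, then for every `ε₂ > 0` there is `k₀` such that
`tr(P_X(k) ρ^{⊗k}) > 1 − ε₂` for all `k ≥ k₀`. -/
theorem stmt_10 {d : ℕ}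
    (ρ : Matrix (Fin d) (Fin d) ℂ) (hρ : ρ.PosSemidef) (hρtr : ρ.trace = 1)
    (r : Fin d → ℝ) (hr_anti : Antitone r)
    (hr_spec : ∃ σ : Equiv.Perm (Fin d), ∀ i, r i = hρ.1.eigenvalues (σ i))
    (ε₁ : ℝ) (hε₁ : 0 < ε₁)
    (P : (k : ℕ) → (Fin d → Fin (k + 1)) → Matrix (Fin k → Fin d) (Fin k → Fin d) ℂ)
    (hP : ∀ (k : ℕ) (lam : Fin d → Fin (k + 1)),
      Antitone (fun i => (lam i : ℕ)) → (∑ i, (lam i : ℕ)) = k →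
        P k lam * P k lam = P k lam ∧ (P k lam).IsHermitian ∧
          LinearMap.range (P k lam).mulVecLin =
            isotypic d k (fun i => if h : i < d then (lam ⟨i, h⟩ : ℕ) else 0)) :
    ∀ ε₂ : ℝ, 0 < ε₂ → ∃ k₀ : ℕ, ∀ k : ℕ, k₀ ≤ k →
      ((∑ lam ∈ univ.filter (fun lam : Fin d → Fin (k + 1) =>
          Antitone (fun i => (lam i : ℕ)) ∧ (∑ i, (lam i : ℕ)) = k ∧
            (∑ i : Fin d, |(lam i : ℝ) / k - r i|) < ε₁), P k lam) *
        tensorPow d k ρ).trace.re > 1 - ε₂ := by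
  intro ε₂ hε₂
  obtain ⟨σ, hσ⟩ := hr_spec
  obtain ⟨k₀, hk₀⟩ := exists_nat_gt (d * (d + 1) / (ε₁ ^ 2 * ε₂))
  refine ⟨k₀ + 1, fun k hk ↦ ?_⟩
  have k_pos : 0 < k := by lia
  have isProjection (lam) (hlam : lam ∈ SchurWeyl.shapes d k) :
      SchurWeyl.IsIsotypicProjection lam (P k lam) := by
    obtain ⟨h_anti, h_sum⟩ := (mem_filter.1 hlam).2
    obtain ⟨h_mul, h_herm, h_range⟩ := hP k lam h_anti h_sum
    exact ⟨h_mul, h_herm, h_range⟩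
  have error_lt : d * (d + 1) / (k * ε₁ ^ 2) < ε₂ := by
    have hk₀k : (k₀ : ℝ) < k := mod_cast hk
    rw [div_lt_iff₀ (by positivity)] at hk₀ ⊢
    nlinarith [mul_pos (pow_pos hε₁ 2) hε₂]
  have bound := SchurWeyl.one_sub_div_le_re_trace_mul_tensorPow hρ hρtr hr_anti hσ isProjection
    k_pos hε₁
  simp only [SchurWeyl.shapes, filter_filter, and_assoc] at bound
  linarith

end
end

section
/- The Araki–Lieb triangle inequality: for any density operator ρ^{AB} on a finite-dimensional bipartite Hilbert space, S(ρ^{AB}) ≥ |S(ρ^A) − S(ρ^B)|. -/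
open Matrix ComplexOrder

noncomputable section

/-- The von Neumann entropy of a Hermitian matrix: the Shannon entropy of its eigenvalue
distribution, `S(ρ) = −Σ_i λ_i log λ_i = −tr(ρ log ρ)`. -/
def vonNeumannEntropy {N : Type*} [Fintype N] [DecidableEq N]
    {M : Matrix N N ℂ} (hM : M.IsHermitian) : ℝ :=
  -∑ i, hM.eigenvalues i * Real.log (hM.eigenvalues i)

/-!
Entropy is subadditive, `S(AB) ≤ S(A) + S(B)`: passing from the spectrum of `ρ` to its diagonal in
the product of the eigenbases of the two marginals only increases Shannon entropy (the two are
related by a doubly stochastic matrix), and that diagonal is a classical joint distribution whose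
marginals are the two marginal spectra. Now purify: writing `ρ = M * Mᴴ` turns `M` into a pure state
on `A ⊗ B ⊗ C`, in which complementary subsystems are isospectral up to zeros. Hence
`S(A) = S(BC) ≤ S(B) + S(C) = S(B) + S(AB)`, and the other half is the same with `A` and `B`
exchanged.
-/

open scoped Kronecker
open Real (negMulLog)

section ShannonEntropy

/-- The Shannon entropy `-∑ i, p i * log (p i)` of a finite family of weights, which need not sum
to one; zero weights contribute nothing since `negMulLog 0 = 0`. -/
def shannonEntropy {ι : Type*} [Fintype ι] (p : ι → ℝ) : ℝ :=
  ∑ i, negMulLog (p i)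

lemma negMulLog_le_neg_mul_log_add_sub {x y : ℝ} (hx : 0 ≤ x) (hy : 0 ≤ y) (hxy : y = 0 → x = 0) :
    negMulLog x ≤ -(x * Real.log y) + (y - x) := by
  rcases hy.eq_or_lt' with rfl | hy_pos
  · simp [hxy rfl]
  calc negMulLog x = negMulLog (y * (x / y)) := by rw [mul_div_cancel₀ x hy_pos.ne']
    _ = x / y * negMulLog y + y * negMulLog (x / y) := Real.negMulLog_mul y (x / y)
    _ ≤ x / y * negMulLog y + y * (1 - x / y) := by
      gcongr
      exact Real.negMulLog_le_one_sub_self (by positivity)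
    _ = -(x * Real.log y) + (y - x) := by
      rw [negMulLog]
      field_simp

lemma shannonEntropy_le_neg_sum_mul_log {ι : Type*} [Fintype ι] {p q : ι → ℝ} (hp : ∀ i, 0 ≤ p i)
    (hq : ∀ i, 0 ≤ q i) (hpq : ∀ i, q i = 0 → p i = 0) (hsum : ∑ i, q i ≤ ∑ i, p i) :
    shannonEntropy p ≤ -∑ i, p i * Real.log (q i) := by
  calc shannonEntropy p ≤ ∑ i, (-(p i * Real.log (q i)) + (q i - p i)) :=
        Finset.sum_le_sum fun i _ => negMulLog_le_neg_mul_log_add_sub (hp i) (hq i) (hpq i)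
    _ = -∑ i, p i * Real.log (q i) + (∑ i, q i - ∑ i, p i) := by
      rw [Finset.sum_add_distrib, Finset.sum_neg_distrib, Finset.sum_sub_distrib]
    _ ≤ -∑ i, p i * Real.log (q i) := by linarith

lemma shannonEntropy_le_shannonEntropy_marginals {α β : Type*} [Fintype α] [Fintype β]
    {p : α × β → ℝ} (hp : ∀ x, 0 ≤ p x) (hsum : ∑ x, p x ≤ 1) :
    shannonEntropy p ≤
      shannonEntropy (fun a => ∑ b, p (a, b)) + shannonEntropy (fun b => ∑ a, p (a, b)) := by
  set q : α → ℝ := fun a => ∑ b, p (a, b) with hq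
  set r : β → ℝ := fun b => ∑ a, p (a, b) with hr
  have hq_nonneg : ∀ a, 0 ≤ q a := fun a => Finset.sum_nonneg fun b _ => hp (a, b)
  have hr_nonneg : ∀ b, 0 ≤ r b := fun b => Finset.sum_nonneg fun a _ => hp (a, b)
  have eq_zero_of_left : ∀ x : α × β, q x.1 = 0 → p x = 0 := fun x hx =>
    (Finset.sum_eq_zero_iff_of_nonneg fun b _ => hp (x.1, b)).1 hx x.2 (Finset.mem_univ _)
  have eq_zero_of_right : ∀ x : α × β, r x.2 = 0 → p x = 0 := fun x hx =>
    (Finset.sum_eq_zero_iff_of_nonneg fun a _ => hp (a, x.2)).1 hx x.1 (Finset.mem_univ _)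
  have sum_product : ∑ x : α × β, q x.1 * r x.2 = (∑ x, p x) * ∑ x, p x := by
    rw [Fintype.sum_prod_type, ← Finset.sum_mul_sum]
    exact congrArg₂ (· * ·) (Fintype.sum_prod_type p).symm (Fintype.sum_prod_type_right p).symm
  have log_product : ∀ x : α × β,
      p x * Real.log (q x.1 * r x.2) = p x * Real.log (q x.1) + p x * Real.log (r x.2) := by
    intro x
    by_cases hx : p x = 0
    · simp [hx]
    · rw [Real.log_mul (mt (eq_zero_of_left x) hx) (mt (eq_zero_of_right x) hx), mul_add]
  calc shannonEntropy p ≤ -∑ x : α × β, p x * Real.log (q x.1 * r x.2) := by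
        refine shannonEntropy_le_neg_sum_mul_log hp
          (fun x => mul_nonneg (hq_nonneg x.1) (hr_nonneg x.2))
          (fun x hx => (mul_eq_zero.1 hx).elim (eq_zero_of_left x) (eq_zero_of_right x)) ?_
        rw [sum_product]
        exact mul_le_of_le_one_left (Finset.sum_nonneg fun x _ => hp x) hsum
    _ = shannonEntropy q + shannonEntropy r := by
      simp only [log_product, Finset.sum_add_distrib, neg_add, shannonEntropy, negMulLog, neg_mul,
        Finset.sum_neg_distrib]
      rw [Fintype.sum_prod_type, Fintype.sum_prod_type_right (fun x => p x * Real.log (r x.2))]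
      simp only [hq, hr, Finset.sum_mul]

lemma shannonEntropy_le_shannonEntropy_mulVec {ι : Type*} [Fintype ι] [DecidableEq ι]
    {P : Matrix ι ι ℝ} (hP : P ∈ doublyStochastic ℝ ι) {p : ι → ℝ} (hp : ∀ i, 0 ≤ p i) :
    shannonEntropy p ≤ shannonEntropy (P *ᵥ p) := by
  calc shannonEntropy p = ∑ j, (∑ i, P i j) * negMulLog (p j) := by
        simp only [sum_col_of_mem_doublyStochastic hP, one_mul, shannonEntropy]
    _ = ∑ i, ∑ j, P i j * negMulLog (p j) := by
      simp only [Finset.sum_mul]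
      exact Finset.sum_comm
    _ ≤ ∑ i, negMulLog (∑ j, P i j * p j) :=
      Finset.sum_le_sum fun i _ => Real.concaveOn_negMulLog.le_map_sum
        (fun _ _ => nonneg_of_mem_doublyStochastic hP) (sum_row_of_mem_doublyStochastic hP i)
        fun j _ => hp j

end ShannonEntropy

section UnitaryMatrices

variable {𝕜 ι : Type*} [RCLike 𝕜] [Fintype ι] [DecidableEq ι]

lemma map_norm_sq_mem_doublyStochastic {U : Matrix ι ι 𝕜} (hU : U ∈ unitaryGroup ι 𝕜) :
    U.map (‖·‖ ^ 2) ∈ doublyStochastic ℝ ι := by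
  refine mem_doublyStochastic_iff_sum.2 ⟨fun i j => sq_nonneg _, fun i => ?_, fun j => ?_⟩
  · have row : (U * star U) i i = 1 := by rw [mem_unitaryGroup_iff.1 hU, one_apply_eq]
    simp only [mul_apply, star_apply, RCLike.star_def, RCLike.mul_conj] at row
    exact_mod_cast row
  · have col : (star U * U) j j = 1 := by rw [mem_unitaryGroup_iff'.1 hU, one_apply_eq]
    simp only [mul_apply, star_apply, RCLike.star_def, RCLike.conj_mul] at col
    exact_mod_cast col

lemma diag_eq_norm_sq_eigenvectorUnitary_mulVec_eigenvalues {M : Matrix ι ι 𝕜}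
    (hM : M.IsHermitian) (i : ι) :
    M i i = (((hM.eigenvectorUnitary : Matrix ι ι 𝕜).map (‖·‖ ^ 2) *ᵥ hM.eigenvalues) i : ℝ) := by
  have spectral : M = (hM.eigenvectorUnitary : Matrix ι ι 𝕜) *
      diagonal (RCLike.ofReal ∘ hM.eigenvalues) * star (hM.eigenvectorUnitary : Matrix ι ι 𝕜) :=
    hM.spectral_theorem.trans (Unitary.conjStarAlgAut_apply _ _)
  rw [congrFun₂ spectral i i, mul_apply]
  simp only [mul_diagonal, star_apply, RCLike.star_def, mulVec, dotProduct, map_apply,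
    Function.comp_apply, mul_right_comm _ (RCLike.ofReal _), RCLike.mul_conj, RCLike.ofReal_sum,
    RCLike.ofReal_mul, RCLike.ofReal_pow]

lemma diag_conj_eigenvectorUnitary {M : Matrix ι ι 𝕜} (hM : M.IsHermitian) (i : ι) :
    ((hM.eigenvectorUnitary : Matrix ι ι 𝕜)ᴴ * M * (hM.eigenvectorUnitary : Matrix ι ι 𝕜)) i i =
      (hM.eigenvalues i : 𝕜) := by
  have h := hM.conjStarAlgAut_star_eigenvectorUnitary
  rw [Unitary.conjStarAlgAut_star_apply, star_eq_conjTranspose] at h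
  rw [h, diagonal_apply_eq, Function.comp_apply]

end UnitaryMatrices

section VonNeumannEntropy

variable {N K : Type*} [Fintype N] [DecidableEq N] [Fintype K] [DecidableEq K]

lemma vonNeumannEntropy_eq_shannonEntropy {M : Matrix N N ℂ} (hM : M.IsHermitian) :
    vonNeumannEntropy hM = shannonEntropy hM.eigenvalues := by
  simp only [vonNeumannEntropy, shannonEntropy, negMulLog, neg_mul, Finset.sum_neg_distrib]

lemma vonNeumannEntropy_eq_sum_roots_charpoly {M : Matrix N N ℂ} (hM : M.IsHermitian) :
    vonNeumannEntropy hM = (M.charpoly.roots.map fun z => negMulLog z.re).sum := by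
  rw [vonNeumannEntropy_eq_shannonEntropy, hM.roots_charpoly_eq_eigenvalues, Multiset.map_map]
  rfl

lemma vonNeumannEntropy_eq_of_charpoly_eq {M : Matrix N N ℂ} {P : Matrix K K ℂ}
    (hM : M.IsHermitian) (hP : P.IsHermitian) (h : M.charpoly = P.charpoly) :
    vonNeumannEntropy hM = vonNeumannEntropy hP := by
  rw [vonNeumannEntropy_eq_sum_roots_charpoly, vonNeumannEntropy_eq_sum_roots_charpoly, h]

lemma vonNeumannEntropy_mul_comm (M : Matrix N K ℂ) (P : Matrix K N ℂ)
    (hMP : (M * P).IsHermitian) (hPM : (P * M).IsHermitian) :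
    vonNeumannEntropy hMP = vonNeumannEntropy hPM := by
  have sum_roots_X_pow_mul (k : ℕ) {p : Polynomial ℂ} (hp : p.Monic) :
      ((Polynomial.X ^ k * p).roots.map fun z : ℂ => negMulLog z.re).sum =
        (p.roots.map fun z : ℂ => negMulLog z.re).sum := by
    rw [Polynomial.roots_mul ((Polynomial.monic_X_pow k).mul hp).ne_zero, Polynomial.roots_X_pow,
      Multiset.map_add, Multiset.sum_add, Multiset.map_nsmul, Multiset.sum_nsmul,
      Multiset.map_singleton, Multiset.sum_singleton, Complex.zero_re, Real.negMulLog_zero,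
      smul_zero, zero_add]
  rw [vonNeumannEntropy_eq_sum_roots_charpoly, vonNeumannEntropy_eq_sum_roots_charpoly,
    ← sum_roots_X_pow_mul (Fintype.card K) (charpoly_monic (M * P)), charpoly_mul_comm',
    sum_roots_X_pow_mul (Fintype.card N) (charpoly_monic (P * M))]

lemma vonNeumannEntropy_conjTranspose_mul_mul {M W : Matrix N N ℂ} (hW : W ∈ unitaryGroup N ℂ)
    (hM : M.IsHermitian) (hWM : (Wᴴ * M * W).IsHermitian) :
    vonNeumannEntropy hWM = vonNeumannEntropy hM := by
  refine vonNeumannEntropy_eq_of_charpoly_eq hWM hM ?_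
  rw [Matrix.mul_assoc, charpoly_mul_comm, Matrix.mul_assoc, ← star_eq_conjTranspose,
    mem_unitaryGroup_iff.1 hW, Matrix.mul_one]

lemma vonNeumannEntropy_le_shannonEntropy_diag {ρ : Matrix N N ℂ} (hρ : ρ.PosSemidef) :
    vonNeumannEntropy hρ.1 ≤ shannonEntropy fun i => (ρ i i).re := by
  have diag_re : (fun i => (ρ i i).re) =
      (hρ.1.eigenvectorUnitary : Matrix N N ℂ).map (‖·‖ ^ 2) *ᵥ hρ.1.eigenvalues := by
    ext i
    rw [diag_eq_norm_sq_eigenvectorUnitary_mulVec_eigenvalues hρ.1 i]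
    exact Complex.ofReal_re _
  rw [vonNeumannEntropy_eq_shannonEntropy, diag_re]
  exact shannonEntropy_le_shannonEntropy_mulVec
    (map_norm_sq_mem_doublyStochastic hρ.1.eigenvectorUnitary.2) hρ.eigenvalues_nonneg

end VonNeumannEntropy

section PartialTrace

variable {R m n : Type*}

/-- The partial trace over the second tensor factor: the marginal `ρ^A` of `ρ^{AB}`. -/
def partialTraceRight [AddCommMonoid R] [Fintype n] (M : Matrix (m × n) (m × n) R) :
    Matrix m m R :=
  of fun a a' => ∑ b, M (a, b) (a', b)

/-- The partial trace over the first tensor factor: the marginal `ρ^B` of `ρ^{AB}`. -/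
def partialTraceLeft [AddCommMonoid R] [Fintype m] (M : Matrix (m × n) (m × n) R) :
    Matrix n n R :=
  of fun b b' => ∑ a, M (a, b) (a, b')

lemma trace_partialTraceRight [AddCommMonoid R] [Fintype m] [Fintype n]
    (M : Matrix (m × n) (m × n) R) : (partialTraceRight M).trace = M.trace := by
  simp only [trace, diag_apply, partialTraceRight, of_apply, Fintype.sum_prod_type]

lemma isHermitian_partialTraceRight [AddCommMonoid R] [StarAddMonoid R] [Fintype n]
    {M : Matrix (m × n) (m × n) R} (hM : M.IsHermitian) : (partialTraceRight M).IsHermitian := by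
  ext a a'
  simp only [conjTranspose_apply, partialTraceRight, of_apply, star_sum, hM.apply]

lemma isHermitian_partialTraceLeft [AddCommMonoid R] [StarAddMonoid R] [Fintype m]
    {M : Matrix (m × n) (m × n) R} (hM : M.IsHermitian) : (partialTraceLeft M).IsHermitian :=
  isHermitian_partialTraceRight (hM.submatrix Prod.swap)

variable [Fintype m] [Fintype n]

lemma partialTraceRight_kronecker_one_mul [Semiring R] [DecidableEq n] (A : Matrix m m R)
    (M : Matrix (m × n) (m × n) R) :
    partialTraceRight ((A ⊗ₖ 1) * M) = A * partialTraceRight M := by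
  ext a a'
  simp only [partialTraceRight, of_apply, mul_apply, kronecker_apply, one_apply, mul_ite, mul_one,
    mul_zero, ite_mul, zero_mul, Fintype.sum_prod_type, Finset.sum_ite_eq, Finset.mem_univ,
    if_true, Finset.mul_sum]
  exact Finset.sum_comm

lemma partialTraceRight_mul_kronecker_one [Semiring R] [DecidableEq n]
    (M : Matrix (m × n) (m × n) R) (A : Matrix m m R) :
    partialTraceRight (M * (A ⊗ₖ 1)) = partialTraceRight M * A := by
  ext a a'
  simp only [partialTraceRight, of_apply, mul_apply, kronecker_apply, one_apply, mul_ite, mul_one,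
    mul_zero, Fintype.sum_prod_type, Finset.sum_ite_eq', Finset.mem_univ, if_true, Finset.sum_mul]
  exact Finset.sum_comm

variable [CommSemiring R]

lemma partialTraceRight_one_kronecker_mul_comm [DecidableEq m] (B : Matrix n n R)
    (M : Matrix (m × n) (m × n) R) :
    partialTraceRight ((1 ⊗ₖ B) * M) = partialTraceRight (M * (1 ⊗ₖ B)) := by
  ext a a'
  simp only [partialTraceRight, of_apply, mul_apply, kronecker_apply, one_apply, ite_mul, one_mul,
    zero_mul, mul_ite, mul_zero, Fintype.sum_prod_type_right, Finset.sum_ite_eq,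
    Finset.sum_ite_eq', Finset.mem_univ, if_true]
  rw [Finset.sum_comm]
  simp only [mul_comm]

lemma partialTraceRight_kronecker_mul_mul_kronecker [DecidableEq n] {B D : Matrix n n R}
    (hDB : D * B = 1) (A C : Matrix m m R) (M : Matrix (m × n) (m × n) R) :
    partialTraceRight ((A ⊗ₖ B) * M * (C ⊗ₖ D)) = A * partialTraceRight M * C := by
  classical
  have split_left : A ⊗ₖ B = (A ⊗ₖ 1) * (1 ⊗ₖ B) := by
    rw [← mul_kronecker_mul, Matrix.mul_one, Matrix.one_mul]
  have cancel_right : (C ⊗ₖ D) * (1 ⊗ₖ B) = C ⊗ₖ 1 := by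
    rw [← mul_kronecker_mul, Matrix.mul_one, hDB]
  rw [split_left, Matrix.mul_assoc, Matrix.mul_assoc, partialTraceRight_kronecker_one_mul,
    partialTraceRight_one_kronecker_mul_comm, Matrix.mul_assoc, cancel_right,
    partialTraceRight_mul_kronecker_one, Matrix.mul_assoc]

lemma partialTraceLeft_kronecker_mul_mul_kronecker [DecidableEq m] {A C : Matrix m m R}
    (hCA : C * A = 1) (B D : Matrix n n R) (M : Matrix (m × n) (m × n) R) :
    partialTraceLeft ((A ⊗ₖ B) * M * (C ⊗ₖ D)) = B * partialTraceLeft M * D := by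
  classical
  have kronecker_swap : ∀ (X : Matrix m m R) (Y : Matrix n n R),
      (X ⊗ₖ Y).submatrix Prod.swap Prod.swap = Y ⊗ₖ X := by
    intro X Y
    ext ⟨b, a⟩ ⟨b', a'⟩
    exact mul_comm _ _
  calc partialTraceLeft ((A ⊗ₖ B) * M * (C ⊗ₖ D))
      = partialTraceRight (((A ⊗ₖ B) * M * (C ⊗ₖ D)).submatrix Prod.swap Prod.swap) := rfl
    _ = partialTraceRight ((B ⊗ₖ A) * M.submatrix Prod.swap Prod.swap * (D ⊗ₖ C)) := by
      rw [submatrix_mul _ _ _ Prod.swap _ Prod.swap_bijective,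
        submatrix_mul _ _ _ Prod.swap _ Prod.swap_bijective, kronecker_swap, kronecker_swap]
    _ = B * partialTraceLeft M * D :=
      partialTraceRight_kronecker_mul_mul_kronecker hCA B D (M.submatrix Prod.swap Prod.swap)

end PartialTrace

section Subadditivity

variable {A B : Type*} [Fintype A] [DecidableEq A] [Fintype B] [DecidableEq B]

lemma vonNeumannEntropy_le_add_shannonEntropy_diag_partialTrace {ρ : Matrix (A × B) (A × B) ℂ}
    (hρ : ρ.PosSemidef) (htr : ρ.trace ≤ 1) :
    vonNeumannEntropy hρ.1 ≤ shannonEntropy (fun a => (partialTraceRight ρ a a).re) +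
      shannonEntropy (fun b => (partialTraceLeft ρ b b).re) := by
  have diag_nonneg (x : A × B) : 0 ≤ (ρ x x).re := (Complex.le_def.1 hρ.diag_nonneg).1
  have sum_diag_le : ∑ x, (ρ x x).re ≤ 1 := by
    rw [← Complex.re_sum]
    exact (Complex.le_def.1 htr).1
  have h := (vonNeumannEntropy_le_shannonEntropy_diag hρ).trans
    (shannonEntropy_le_shannonEntropy_marginals diag_nonneg sum_diag_le)
  simpa only [partialTraceRight, partialTraceLeft, of_apply, Complex.re_sum] using h

theorem vonNeumannEntropy_le_add_partialTrace {ρ : Matrix (A × B) (A × B) ℂ} (hρ : ρ.PosSemidef)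
    (htr : ρ.trace ≤ 1) :
    vonNeumannEntropy hρ.1 ≤ vonNeumannEntropy (isHermitian_partialTraceRight hρ.1) +
      vonNeumannEntropy (isHermitian_partialTraceLeft hρ.1) := by
  set hA := isHermitian_partialTraceRight hρ.1
  set hB := isHermitian_partialTraceLeft hρ.1
  set U := (hA.eigenvectorUnitary : Matrix A A ℂ)
  set V := (hB.eigenvectorUnitary : Matrix B B ℂ)
  have hU : U * Uᴴ = 1 := Unitary.coe_mul_star_self _
  have hV : V * Vᴴ = 1 := Unitary.coe_mul_star_self _
  have hW : U ⊗ₖ V ∈ unitaryGroup (A × B) ℂ :=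
    kronecker_mem_unitary hA.eigenvectorUnitary.2 hB.eigenvectorUnitary.2
  set σ := (U ⊗ₖ V)ᴴ * ρ * (U ⊗ₖ V) with σ_def
  have hσ : σ.PosSemidef := hρ.conjTranspose_mul_mul_same _
  have trace_σ : σ.trace = ρ.trace := by
    rw [σ_def, Matrix.mul_assoc, trace_mul_comm, Matrix.mul_assoc, ← star_eq_conjTranspose,
      mem_unitaryGroup_iff.1 hW, Matrix.mul_one]
  have diag_A (a : A) : partialTraceRight σ a a = hA.eigenvalues a := by
    rw [σ_def, conjTranspose_kronecker, partialTraceRight_kronecker_mul_mul_kronecker hV]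
    exact diag_conj_eigenvectorUnitary hA a
  have diag_B (b : B) : partialTraceLeft σ b b = hB.eigenvalues b := by
    rw [σ_def, conjTranspose_kronecker, partialTraceLeft_kronecker_mul_mul_kronecker hU]
    exact diag_conj_eigenvectorUnitary hB b
  calc vonNeumannEntropy hρ.1 = vonNeumannEntropy hσ.1 :=
        (vonNeumannEntropy_conjTranspose_mul_mul hW hρ.1 hσ.1).symm
    _ ≤ shannonEntropy (fun a => (partialTraceRight σ a a).re) +
          shannonEntropy (fun b => (partialTraceLeft σ b b).re) :=
      vonNeumannEntropy_le_add_shannonEntropy_diag_partialTrace hσ (trace_σ.trans_le htr)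
    _ = vonNeumannEntropy hA + vonNeumannEntropy hB := by
      simp only [diag_A, diag_B, Complex.ofReal_re, vonNeumannEntropy_eq_shannonEntropy]

end Subadditivity

section Purification

/-- Moves the `B` factor of a bipartite operator from the output to the input side. Reading
`M : C → A ⊗ B` as a pure state of `A ⊗ B ⊗ C`, this is the same state cut as `A | BC` instead
of `AB | C`. -/
def regroup {R A B C : Type*} (M : Matrix (A × B) C R) : Matrix A (B × C) R :=
  of fun a x => M (a, x.1) x.2

variable {R A B C : Type*} [Star R]

lemma partialTraceRight_mul_conjTranspose [NonUnitalNonAssocSemiring R] [Fintype B] [Fintype C]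
    (M : Matrix (A × B) C R) :
    partialTraceRight (M * Mᴴ) = regroup M * (regroup M)ᴴ := by
  ext a a'
  simp only [partialTraceRight, regroup, of_apply, mul_apply, conjTranspose_apply,
    Fintype.sum_prod_type]

lemma partialTraceLeft_conjTranspose_regroup_mul [NonUnitalNonAssocSemiring R] [Fintype A]
    [Fintype B] (M : Matrix (A × B) C R) :
    partialTraceLeft ((regroup M)ᴴ * regroup M) = Mᴴ * M := by
  ext c c'
  simp only [partialTraceLeft, regroup, of_apply, mul_apply, conjTranspose_apply,
    Fintype.sum_prod_type_right]

lemma partialTraceRight_conjTranspose_regroup_mul [NonUnitalCommSemiring R] [Fintype A]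
    [Fintype C] (M : Matrix (A × B) C R) :
    partialTraceRight ((regroup M)ᴴ * regroup M) = (partialTraceLeft (M * Mᴴ))ᵀ := by
  ext b b'
  simp only [partialTraceRight, partialTraceLeft, regroup, of_apply, mul_apply,
    conjTranspose_apply, transpose_apply]
  rw [Finset.sum_comm]
  simp only [mul_comm]

end Purification

section ArakiLieb

variable {A B : Type*} [Fintype A] [DecidableEq A] [Fintype B] [DecidableEq B]

open scoped MatrixOrder in
theorem vonNeumannEntropy_partialTraceRight_le {ρ : Matrix (A × B) (A × B) ℂ} (hρ : ρ.PosSemidef)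
    (htr : ρ.trace ≤ 1) :
    vonNeumannEntropy (isHermitian_partialTraceRight hρ.1) ≤
      vonNeumannEntropy (isHermitian_partialTraceLeft hρ.1) + vonNeumannEntropy hρ.1 := by
  obtain ⟨M, rfl⟩ : ∃ M : Matrix (A × B) (A × B) ℂ, ρ = M * Mᴴ :=
    CStarAlgebra.nonneg_iff_eq_mul_star_self.1 hρ.nonneg
  set hA := isHermitian_partialTraceRight hρ.1
  set hB := isHermitian_partialTraceLeft hρ.1
  have hBC : ((regroup M)ᴴ * regroup M).PosSemidef := posSemidef_conjTranspose_mul_self _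
  have trace_BC : ((regroup M)ᴴ * regroup M).trace = (M * Mᴴ).trace := by
    rw [trace_mul_comm, ← partialTraceRight_mul_conjTranspose, trace_partialTraceRight]
  have entropy_A_eq_BC : vonNeumannEntropy hA = vonNeumannEntropy hBC.1 := by
    simp only [partialTraceRight_mul_conjTranspose]
    exact vonNeumannEntropy_mul_comm _ _ _ _
  have entropy_B : vonNeumannEntropy (isHermitian_partialTraceRight hBC.1) =
      vonNeumannEntropy hB := by
    refine vonNeumannEntropy_eq_of_charpoly_eq _ _ ?_
    rw [partialTraceRight_conjTranspose_regroup_mul, charpoly_transpose]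
  have entropy_C_eq_AB : vonNeumannEntropy (isHermitian_partialTraceLeft hBC.1) =
      vonNeumannEntropy hρ.1 := by
    simp only [partialTraceLeft_conjTranspose_regroup_mul]
    exact vonNeumannEntropy_mul_comm _ _ _ _
  rw [entropy_A_eq_BC, ← entropy_B, ← entropy_C_eq_AB]
  exact vonNeumannEntropy_le_add_partialTrace hBC (trace_BC.trans_le htr)

theorem stmt_16_general {ρ : Matrix (A × B) (A × B) ℂ} (hρ : ρ.PosSemidef) (htr : ρ.trace ≤ 1) :
    |vonNeumannEntropy (isHermitian_partialTraceRight hρ.1) -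
      vonNeumannEntropy (isHermitian_partialTraceLeft hρ.1)| ≤ vonNeumannEntropy hρ.1 := by
  have trace_swap : (ρ.submatrix Prod.swap Prod.swap).trace = ρ.trace :=
    (Equiv.prodComm B A).sum_comp fun x => ρ x x
  have le_swap := vonNeumannEntropy_partialTraceRight_le (hρ.submatrix Prod.swap)
    (trace_swap.trans_le htr)
  have entropy_swap : vonNeumannEntropy (hρ.submatrix Prod.swap).1 = vonNeumannEntropy hρ.1 :=
    vonNeumannEntropy_eq_of_charpoly_eq _ _ (charpoly_reindex (Equiv.prodComm A B) ρ)
  rw [entropy_swap] at le_swap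
  exact abs_sub_le_iff.2 ⟨sub_le_iff_le_add'.2 (vonNeumannEntropy_partialTraceRight_le hρ htr),
    sub_le_iff_le_add'.2 le_swap⟩

end ArakiLieb

/-- Araki–Lieb triangle inequality: for any density operator `ρ^{AB}` on a
(finite-dimensional) bipartite system with marginals `ρ^A` and `ρ^B`,
`S(ρ^{AB}) ≥ |S(ρ^A) − S(ρ^B)|`. -/
theorem stmt_16 {m n : ℕ}
    (ρ : Matrix (Fin m × Fin n) (Fin m × Fin n) ℂ)
    (hρ : ρ.PosSemidef) (hρtr : ρ.trace = 1)
    (ρA : Matrix (Fin m) (Fin m) ℂ)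
    (hρA : ∀ a a', ρA a a' = ∑ b, ρ (a, b) (a', b)) (hρAh : ρA.IsHermitian)
    (ρB : Matrix (Fin n) (Fin n) ℂ)
    (hρB : ∀ b b', ρB b b' = ∑ a, ρ (a, b) (a, b')) (hρBh : ρB.IsHermitian) :
    vonNeumannEntropy hρ.1 ≥ |vonNeumannEntropy hρAh - vonNeumannEntropy hρBh| := by
  obtain rfl : ρA = partialTraceRight ρ := ext hρA
  obtain rfl : ρB = partialTraceLeft ρ := ext hρB
  exact stmt_16_general hρ hρtr.le

end
end
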